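/- Suppose A, B ⊆ 𝔽_p are finite sets with |A|, |B| < √p, |A+A| ≤ K|A|, |B+B| ≤ L|B|, and 0 ∉ A. Then the number of sextuples (a,a',b₁,b₁',b₂,b₂') ∈ A² × B⁴ with b₁a' = b₁'a and b₂a' = b₂'a is O(K^{5/4}·L^{5/2}·|A|·|B|²·log p + |A|²·|B|). -/

import Mathlib

open Finset Pointwise

namespace RudnevAux

open MvPolynomial in
lemma derivative_aeval {F : Type*} [Field F] (f : Fin 3 → Polynomial F)
    (P : MvPolynomial (Fin 3) F) :
    Polynomial.derivative (aeval f P) =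
      ∑ i, aeval f (pderiv i P) * Polynomial.derivative (f i) := by
  induction P using MvPolynomial.induction_on with
  | C a => simp
  | add p q hp hq => simp only [map_add, hp, hq, add_mul, Finset.sum_add_distrib]
  | mul_X p n hp =>
    simp only [map_mul, aeval_X, Polynomial.derivative_mul, hp, pderiv_mul, map_add, add_mul,
      Finset.sum_add_distrib, pderiv_X, Finset.sum_mul]
    refine congrArg₂ (· + ·) ?_ ?_
    · exact Finset.sum_congr rfl fun i _ => mul_right_comm _ _ _
    · rw [Finset.sum_eq_single n]
      · simp
      · intro b _ hb
        simp [hb.symm]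
      · simp

/-- restriction to a line of the first family -/
noncomputable def L1 {F : Type*} [Field F] (x : F × F × F) :
    MvPolynomial (Fin 3) F →ₐ[F] Polynomial F :=
  MvPolynomial.aeval ![Polynomial.X, Polynomial.C x.2.2,
    Polynomial.C x.1 * Polynomial.X + Polynomial.C x.2.1]

/-- restriction to a line of the second family -/
noncomputable def L2 {F : Type*} [Field F] (x : F × F × F) :
    MvPolynomial (Fin 3) F →ₐ[F] Polynomial F :=
  MvPolynomial.aeval ![Polynomial.C x.2.2, Polynomial.X,
    Polynomial.C x.1 * Polynomial.X + Polynomial.C x.2.1]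

section
variable {F : Type*} [Field F]
open MvPolynomial

lemma L1_der (x : F × F × F) (P : MvPolynomial (Fin 3) F) :
    Polynomial.derivative (L1 x P) =
      L1 x (pderiv 0 P) + Polynomial.C x.1 * L1 x (pderiv 2 P) := by
  unfold L1
  rw [derivative_aeval, Fin.sum_univ_three]
  simp
  ring

lemma L2_der (x : F × F × F) (P : MvPolynomial (Fin 3) F) :
    Polynomial.derivative (L2 x P) =
      L2 x (pderiv 1 P) + Polynomial.C x.1 * L2 x (pderiv 2 P) := by
  unfold L2
  rw [derivative_aeval, Fin.sum_univ_three]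
  simp
  ring

lemma L1_deg (x : F × F × F) (P : MvPolynomial (Fin 3) F) :
    (L1 x P).natDegree ≤ P.totalDegree := by
  have := aeval_natDegree_le (m := P.totalDegree) (n := 1) P le_rfl
    ![Polynomial.X, Polynomial.C x.2.2, Polynomial.C x.1 * Polynomial.X + Polynomial.C x.2.1] (by
      intro i
      fin_cases i
      · simp
      · simp
      · exact Polynomial.natDegree_linear_le)
  simpa [L1] using this

lemma L2_deg (x : F × F × F) (P : MvPolynomial (Fin 3) F) :
    (L2 x P).natDegree ≤ P.totalDegree := by
  have := aeval_natDegree_le (m := P.totalDegree) (n := 1) P le_rfl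
    ![Polynomial.C x.2.2, Polynomial.X, Polynomial.C x.1 * Polynomial.X + Polynomial.C x.2.1] (by
      intro i
      fin_cases i
      · simp
      · simp
      · exact Polynomial.natDegree_linear_le)
  simpa [L2] using this

lemma eval_aeval3 (f : Fin 3 → Polynomial F) (t : F) (P : MvPolynomial (Fin 3) F) :
    Polynomial.eval t (aeval f P) = eval (fun i => Polynomial.eval t (f i)) P := by
  induction P using MvPolynomial.induction_on with
  | C a => simp
  | add p q hp hq => simp [hp, hq]
  | mul_X p n hp => simp [hp]

lemma L1_eval (x : F × F × F) (t : F) (P : MvPolynomial (Fin 3) F) :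
    Polynomial.eval t (L1 x P) = eval ![t, x.2.2, x.1 * t + x.2.1] P := by
  unfold L1
  rw [eval_aeval3]
  congr 2
  funext i
  fin_cases i <;> simp

lemma L2_eval (x : F × F × F) (t : F) (P : MvPolynomial (Fin 3) F) :
    Polynomial.eval t (L2 x P) = eval ![x.2.2, t, x.1 * t + x.2.1] P := by
  unfold L2
  rw [eval_aeval3]
  congr 2
  funext i
  fin_cases i <;> simp

lemma totalDegree_pderiv_add_one (i : Fin 3) (P : MvPolynomial (Fin 3) F) (h : pderiv i P ≠ 0) :
    (pderiv i P).totalDegree + 1 ≤ P.totalDegree := by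
  obtain ⟨m, hm, hd⟩ : ∃ m ∈ (pderiv i P).support, (pderiv i P).totalDegree = m.degree := by
    have hne : (pderiv i P).support.Nonempty := by simpa using h
    obtain ⟨m, hm, hd⟩ := Finset.exists_mem_eq_sup _ hne (fun s : Fin 3 →₀ ℕ => s.sum fun _ e => e)
    exact ⟨m, hm, hd⟩
  rw [hd]
  have hm' : m + Finsupp.single i 1 ∈ P.support := by
    rw [mem_support_iff] at hm ⊢
    rw [coeff_pderiv] at hm
    intro h0
    apply hm
    simp [h0]
  have := le_totalDegree hm'
  have e : ((m + Finsupp.single i 1).sum fun _ e => e) = m.degree + 1 := by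
    change (m + Finsupp.single i 1).degree = _
    simp
  omega

lemma totalDegree_pderiv_le (i : Fin 3) (P : MvPolynomial (Fin 3) F) :
    (pderiv i P).totalDegree ≤ P.totalDegree := by
  by_cases h : pderiv i P = 0
  · simp [h]
  · have := totalDegree_pderiv_add_one i P h
    omega

lemma const_of_derivative_zero {p : ℕ} [CharP F p] (f : Polynomial F)
    (h : Polynomial.derivative f = 0) (hd : f.natDegree < p) : f.natDegree = 0 := by
  by_contra hn
  have h1 := congrArg (fun g => Polynomial.coeff g (f.natDegree - 1)) h
  simp only [Polynomial.coeff_derivative, Polynomial.coeff_zero] at h1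
  rw [Nat.sub_add_cancel (by omega)] at h1
  rcases mul_eq_zero.mp h1 with h2 | h2
  · rw [← Polynomial.leadingCoeff, Polynomial.leadingCoeff_eq_zero] at h2
    simp [h2] at hn
  · have h3 : ((f.natDegree : ℕ) : F) = 0 := by
      have : f.natDegree = f.natDegree - 1 + 1 := by omega
      rw [this]; push_cast; exact h2
    rw [CharP.cast_eq_zero_iff F p] at h3
    have := Nat.le_of_dvd (by omega) h3
    omega

lemma prop_of_wronskian {p : ℕ} [CharP F p] (f h : Polynomial F) (hh : h ≠ 0)
    (hf : f.natDegree < p) (hhd : h.natDegree < p)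
    (hw : Polynomial.derivative f * h = f * Polynomial.derivative h) :
    ∃ c : F, f = Polynomial.C c * h := by
  classical
  by_cases hf0 : f = 0
  · exact ⟨0, by simp [hf0]⟩
  obtain ⟨g, f1, h1, hg, hc, rfl, rfl⟩ :
      ∃ g f1 h1 : Polynomial F, g ≠ 0 ∧ IsCoprime f1 h1 ∧ f = g * f1 ∧ h = g * h1 := by
    let _ := UniqueFactorizationMonoid.toGCDMonoid (Polynomial F)
    obtain ⟨f1, h1, e1, e2, hu⟩ := extract_gcd f h
    refine ⟨gcd f h, f1, h1, ?_, (gcd_isUnit_iff _ _).mp hu, e1, e2⟩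
    intro h0
    rw [h0, zero_mul] at e2
    exact hh e2
  have hf1 : f1 ≠ 0 := right_ne_zero_of_mul hf0
  have hh1 : h1 ≠ 0 := right_ne_zero_of_mul hh
  have hw2 : Polynomial.wronskian f1 h1 = 0 := by
    have : g ^ 2 * Polynomial.wronskian f1 h1 = 0 := by
      simp only [Polynomial.derivative_mul] at hw
      simp only [Polynomial.wronskian]
      linear_combination -hw
    rcases mul_eq_zero.mp this with h | h
    · exact absurd h (pow_ne_zero _ hg)
    · exact h
  obtain ⟨d1, d2⟩ := hc.wronskian_eq_zero_iff.mp hw2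
  rw [Polynomial.natDegree_mul hg hf1] at hf
  rw [Polynomial.natDegree_mul hg hh1] at hhd
  have e1 := Polynomial.eq_C_of_natDegree_eq_zero (const_of_derivative_zero (p := p) f1 d1 (by omega))
  have e2 := Polynomial.eq_C_of_natDegree_eq_zero (const_of_derivative_zero (p := p) h1 d2 (by omega))
  have hne : h1.coeff 0 ≠ 0 := by
    intro h0; rw [h0] at e2; simp at e2; exact hh1 e2
  refine ⟨f1.coeff 0 / h1.coeff 0, ?_⟩
  rw [e1, e2]
  simp only [Polynomial.coeff_C_zero]
  rw [mul_left_comm, ← Polynomial.C_mul, div_mul_cancel₀ _ hne]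

/-- a rational function with zero second derivative is affine -/
lemma affine_of_second {p : ℕ} [CharP F p] (n σ : Polynomial F) (D : ℕ) (hσ : σ ≠ 0)
    (hn : n.natDegree ≤ D) (hσd : σ.natDegree ≤ D) (hD : 2 * D + 1 < p)
    (h : σ * Polynomial.derivative (σ * Polynomial.derivative n - n * Polynomial.derivative σ)
      = 2 * Polynomial.derivative σ *
        (σ * Polynomial.derivative n - n * Polynomial.derivative σ)) :
    ∃ e g : F, n = (Polynomial.C e * Polynomial.X + Polynomial.C g) * σ := by
  set ω := σ * Polynomial.derivative n - n * Polynomial.derivative σ with hω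
  have hdω : ω.natDegree ≤ 2 * D := by
    refine (Polynomial.natDegree_sub_le _ _).trans (max_le ?_ ?_)
    · refine Polynomial.natDegree_mul_le.trans ?_
      have := Polynomial.natDegree_derivative_le n
      omega
    · refine Polynomial.natDegree_mul_le.trans ?_
      have := Polynomial.natDegree_derivative_le σ
      omega
  obtain ⟨e, he⟩ := prop_of_wronskian (p := p) ω (σ ^ 2) (pow_ne_zero _ hσ) (by omega)
    (by have := Polynomial.natDegree_pow_le (p := σ) (n := 2); omega) (by
      rw [pow_two, Polynomial.derivative_mul]
      linear_combination σ * h)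
  obtain ⟨g, hg⟩ := prop_of_wronskian (p := p) (n - Polynomial.C e * Polynomial.X * σ) σ hσ
    (by
      have h1 := Polynomial.natDegree_sub_le n (Polynomial.C e * Polynomial.X * σ)
      have h2 : (Polynomial.C e * Polynomial.X * σ).natDegree ≤ 1 + D := by
        refine Polynomial.natDegree_mul_le.trans ?_
        have := Polynomial.natDegree_C_mul_X_pow_le e 1
        rw [pow_one] at this
        omega
      have : max n.natDegree (Polynomial.C e * Polynomial.X * σ).natDegree ≤ 1 + D :=
        max_le (by omega) h2
      by_cases hD0 : D = 0
      · omega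
      · omega) (by omega) (by
      simp
      linear_combination he)
  exact ⟨e, g, by linear_combination hg⟩

lemma pderiv_pderiv_comm' (P : MvPolynomial (Fin 3) F) (i j : Fin 3) :
    pderiv i (pderiv j P) = pderiv j (pderiv i P) := by
  have h : ⁅(pderiv i : Derivation F (MvPolynomial (Fin 3) F) (MvPolynomial (Fin 3) F)),
      (pderiv j : Derivation F (MvPolynomial (Fin 3) F) (MvPolynomial (Fin 3) F))⁆ = 0 := by
    refine MvPolynomial.derivation_ext fun k => ?_
    simp [Derivation.commutator_apply, pderiv_X, Pi.single_apply]
    split_ifs <;> simp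
  have := congrArg (fun d => d P) h
  simp only [Derivation.commutator_apply, Derivation.coe_zero, Pi.zero_apply] at this
  exact sub_eq_zero.mp this

/-- the commutation identity -/
lemma comm_identity (Q : MvPolynomial (Fin 3) F) :
    let S := pderiv 2 Q
    let dv := fun P => S * pderiv 0 P - pderiv 0 Q * pderiv 2 P
    let dw := fun P => S * pderiv 1 P - pderiv 1 Q * pderiv 2 P
    let T1 := S ^ 2 * pderiv 0 (pderiv 0 Q) - 2 * S * pderiv 0 Q * pderiv 0 S
      + (pderiv 0 Q) ^ 2 * pderiv 2 S
    let E1 := S * dv (pderiv 1 Q) - pderiv 1 Q * dv S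
    S * dv E1 - 3 * E1 * dv S = S * dw T1 - 3 * T1 * dw S := by
  have c01 : ∀ P : MvPolynomial (Fin 3) F, pderiv 1 (pderiv 0 P) = pderiv 0 (pderiv 1 P) :=
    fun P => pderiv_pderiv_comm' P 1 0
  have c02 : ∀ P : MvPolynomial (Fin 3) F, pderiv 2 (pderiv 0 P) = pderiv 0 (pderiv 2 P) :=
    fun P => pderiv_pderiv_comm' P 2 0
  have c12 : ∀ P : MvPolynomial (Fin 3) F, pderiv 2 (pderiv 1 P) = pderiv 1 (pderiv 2 P) :=
    fun P => pderiv_pderiv_comm' P 2 1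
  have two : ∀ i : Fin 3, pderiv i (2 : MvPolynomial (Fin 3) F) = 0 := fun i => by
    exact_mod_cast (pderiv i).map_natCast 2
  simp only [map_sub, map_add, pderiv_mul, pderiv_pow, two, c01, c02, c12]
  push_cast
  ring
end
end RudnevAux

namespace RudnevAux
section
variable {F : Type*} [Field F]
open MvPolynomial

/-- existence of a low degree surface through the lines of the first family -/
lemma exists_surface [Infinite F] (𝓐 : Finset (F × F × F)) (d : ℕ)
    (hd : 3 * 𝓐.card ≤ (d + 1) ^ 2) :
    ∃ Q : MvPolynomial (Fin 3) F, Q ≠ 0 ∧ Q.totalDegree ≤ 3 * d ∧ ∀ x ∈ 𝓐, L1 x Q = 0 := by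
  classical
  obtain ⟨Y, hY⟩ := Infinite.exists_subset_card_eq F (3 * d + 1)
  let mon : (Fin 3 → Fin (d + 1)) → (Fin 3 →₀ ℕ) :=
    fun f => Finsupp.equivFunOnFinite.symm fun i => (f i : ℕ)
  have hmon : Function.Injective mon := by
    intro f g h
    have h2 := Finsupp.equivFunOnFinite.symm.injective h
    funext i
    exact Fin.ext (congrFun h2 i)
  let Φ : ((Fin 3 → Fin (d + 1)) → F) →ₗ[F] MvPolynomial (Fin 3) F :=
    { toFun := fun c => ∑ f, monomial (mon f) (c f)
      map_add' := by intro a b; simp [Finset.sum_add_distrib]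
      map_smul' := by intro a b; simp [Finset.smul_sum, smul_monomial] }
  have hcoef : ∀ c f, coeff (mon f) (Φ c) = c f := by
    intro c f
    simp only [Φ, LinearMap.coe_mk, AddHom.coe_mk, coeff_sum, coeff_monomial]
    rw [Finset.sum_eq_single f]
    · simp
    · intro b _ hb
      rw [if_neg (fun h => hb (hmon h))]
    · simp
  let Ψ : ((Fin 3 → Fin (d + 1)) → F) →ₗ[F] ((𝓐 × Y) → F) :=
    LinearMap.pi fun z => (Polynomial.leval (z.2 : F)).comp
      ((L1 (z.1 : F × F × F)).toLinearMap.comp Φ)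
  have hker : LinearMap.ker Ψ ≠ ⊥ := by
    apply LinearMap.ker_ne_bot_of_finrank_lt
    simp only [Module.finrank_fintype_fun_eq_card, Fintype.card_prod, Fintype.card_coe, hY,
      Fintype.card_pi, Fintype.card_fin, Finset.prod_const, Finset.card_univ]
    nlinarith [Nat.zero_le d, Nat.zero_le 𝓐.card]
  obtain ⟨c, hc, hc0⟩ := (Submodule.ne_bot_iff _).mp hker
  have hdeg : (Φ c).totalDegree ≤ 3 * d := by
    refine (totalDegree_finsetSum _ _).trans (Finset.sup_le fun f _ => ?_)
    refine (totalDegree_monomial_le _ _).trans ?_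
    have : (mon f).sum (fun _ => id) = ∑ i, (f i : ℕ) := by
      rw [Finsupp.sum_fintype _ _ (by simp)]
      simp [mon]
    rw [this, Fin.sum_univ_three]
    have := (f 0).2; have := (f 1).2; have := (f 2).2
    omega
  refine ⟨Φ c, ?_, hdeg, ?_⟩
  · intro h
    apply hc0
    funext f
    rw [← hcoef c f, h]; simp
  · intro x hx
    refine Polynomial.eq_zero_of_natDegree_lt_card_of_eval_eq_zero' _ Y ?_ ?_
    · intro y hy
      have := congrFun (LinearMap.mem_ker.mp hc) (⟨x, hx⟩, ⟨y, hy⟩)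
      simpa [Ψ, Polynomial.leval] using this
    · rw [hY]
      have := L1_deg x (Φ c)
      omega

/-- incidence relation -/
def Rel (x y : F × F × F) : Prop := x.1 * y.2.2 + x.2.1 = y.1 * x.2.2 + y.2.1

open Classical in
lemma card_crossings (𝓐 : Finset (F × F × F)) (T : ℕ)
    (hpar : ∀ x ∈ 𝓐, ∀ y ∈ 𝓐, x.2.2 = y.2.2 → x.1 = y.1)
    (hT : ∀ x ∈ 𝓐, T ≤ (𝓐.filter (fun y => Rel x y)).card) (x : F × F × F) (hx : x ∈ 𝓐) :
    T ≤ ((𝓐.filter (fun y => Rel x y)).image (fun y => y.2.2)).card := by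
  rw [Finset.card_image_of_injOn]
  · exact hT x hx
  · rintro ⟨a, b, c⟩ hy ⟨a', b', c'⟩ hz h
    simp only [Finset.mem_coe, Finset.mem_filter] at hy hz h
    unfold Rel at hy hz
    simp only at hy hz
    have h1 := hpar _ hy.1 _ hz.1 h
    simp only at h1
    subst h1 h
    have : b = b' := by linear_combination hz.2 - hy.2
    rw [this]

open Classical in
lemma van12 (𝓐 : Finset (F × F × F)) (T : ℕ)
    (hcr : ∀ x ∈ 𝓐, T ≤ ((𝓐.filter (fun y => Rel x y)).image (fun y => y.2.2)).card)
    (P : MvPolynomial (Fin 3) F) (hP : P.totalDegree < T) (h : ∀ x ∈ 𝓐, L1 x P = 0) :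
    ∀ x ∈ 𝓐, L2 x P = 0 := by
  intro x hx
  refine Polynomial.eq_zero_of_natDegree_lt_card_of_eval_eq_zero' _
    ((𝓐.filter (fun y => Rel x y)).image (fun y => y.2.2)) ?_
    (((L2_deg x P).trans_lt hP).trans_le (hcr x hx))
  intro t ht
  obtain ⟨y, hy, rfl⟩ := Finset.mem_image.mp ht
  obtain ⟨hy, hr⟩ := Finset.mem_filter.mp hy
  have := congrArg (Polynomial.eval x.2.2) (h y hy)
  rw [L1_eval, Polynomial.eval_zero] at this
  rw [L2_eval, hr]
  exact this

open Classical in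
lemma van21 (𝓐 : Finset (F × F × F)) (T : ℕ)
    (hcr : ∀ x ∈ 𝓐, T ≤ ((𝓐.filter (fun y => Rel x y)).image (fun y => y.2.2)).card)
    (P : MvPolynomial (Fin 3) F) (hP : P.totalDegree < T) (h : ∀ x ∈ 𝓐, L2 x P = 0) :
    ∀ x ∈ 𝓐, L1 x P = 0 := by
  intro x hx
  refine Polynomial.eq_zero_of_natDegree_lt_card_of_eval_eq_zero' _
    ((𝓐.filter (fun y => Rel x y)).image (fun y => y.2.2)) ?_
    (((L1_deg x P).trans_lt hP).trans_le (hcr x hx))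
  intro t ht
  obtain ⟨y, hy, rfl⟩ := Finset.mem_image.mp ht
  obtain ⟨hy, hr⟩ := Finset.mem_filter.mp hy
  have := congrArg (Polynomial.eval x.2.2) (h y hy)
  rw [L2_eval, Polynomial.eval_zero] at this
  rw [L1_eval, hr]
  exact this

/-- a polynomial with vanishing last partial derivative cannot vanish on the lines -/
lemma pderiv_ne_zero [Infinite F] {p : ℕ} [CharP F p] (Q : MvPolynomial (Fin 3) F) (hQ : Q ≠ 0)
    (hp : Q.totalDegree < p) (𝓐 : Finset (F × F × F)) (W : Finset F)
    (hW : ∀ w ∈ W, ∃ x ∈ 𝓐, x.2.2 = w) (hc : Q.totalDegree < W.card)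
    (h : ∀ x ∈ 𝓐, L1 x Q = 0) : pderiv 2 Q ≠ 0 := by
  intro h0
  have hind : ∀ v w s s' : F, eval ![v, w, s] Q = eval ![v, w, s'] Q := by
    intro v w s s'
    set f : Fin 3 → Polynomial F := ![Polynomial.C v, Polynomial.C w, Polynomial.X] with hf
    have hder : Polynomial.derivative (aeval f Q) = 0 := by
      rw [derivative_aeval, Fin.sum_univ_three]
      simp [hf, h0]
    have hdeg : (aeval f Q).natDegree ≤ Q.totalDegree := by
      have := aeval_natDegree_le (m := Q.totalDegree) (n := 1) Q le_rfl f (by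
        intro i
        fin_cases i <;> simp [hf])
      simpa using this
    have hconst := Polynomial.eq_C_of_natDegree_eq_zero
      (const_of_derivative_zero (p := p) _ hder (by omega))
    have key : ∀ s, eval ![v, w, s] Q = (aeval f Q).coeff 0 := by
      intro s
      have h1 := eval_aeval3 f s Q
      rw [hconst, Polynomial.eval_C] at h1
      rw [h1]
      congr 2
      funext i
      fin_cases i <;> simp [hf]
    rw [key, key]
  apply hQ
  apply MvPolynomial.funext
  intro z
  set f : Fin 3 → Polynomial F := ![Polynomial.C (z 0), Polynomial.X, Polynomial.C (z 2)] with hf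
  have hz : aeval f Q = 0 := by
    refine Polynomial.eq_zero_of_natDegree_lt_card_of_eval_eq_zero' _ W ?_ ?_
    · intro w hw
      obtain ⟨x, hx, rfl⟩ := hW w hw
      rw [eval_aeval3]
      have h1 := congrArg (Polynomial.eval (z 0)) (h x hx)
      rw [L1_eval, Polynomial.eval_zero, hind _ _ _ (z 2)] at h1
      rw [← h1]
      congr 2
      funext i
      fin_cases i <;> simp [hf]
    · have := aeval_natDegree_le (m := Q.totalDegree) (n := 1) Q le_rfl f (by
        intro i
        fin_cases i <;> simp [hf])
      rw [mul_one] at this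
      omega
  have h1 := eval_aeval3 f (z 1) Q
  rw [hz, Polynomial.eval_zero] at h1
  rw [map_zero, h1]
  congr 2
  funext i
  fin_cases i <;> simp [hf]

lemma td_mul {a b : MvPolynomial (Fin 3) F} {m n : ℕ} (ha : a.totalDegree ≤ m)
    (hb : b.totalDegree ≤ n) : (a * b).totalDegree ≤ m + n :=
  (totalDegree_mul a b).trans (add_le_add ha hb)

lemma td_sub {a b : MvPolynomial (Fin 3) F} {m : ℕ} (ha : a.totalDegree ≤ m)
    (hb : b.totalDegree ≤ m) : (a - b).totalDegree ≤ m :=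
  (totalDegree_sub a b).trans (max_le ha hb)

lemma td_add {a b : MvPolynomial (Fin 3) F} {m : ℕ} (ha : a.totalDegree ≤ m)
    (hb : b.totalDegree ≤ m) : (a + b).totalDegree ≤ m :=
  (totalDegree_add a b).trans (max_le ha hb)

open Classical in
/-- The abstract incidence theorem. -/
theorem incidence [Infinite F] {p : ℕ} [CharP F p] (𝓐 : Finset (F × F × F)) (hne : 𝓐.Nonempty)
    (T d : ℕ) (hpar : ∀ x ∈ 𝓐, ∀ y ∈ 𝓐, x.2.2 = y.2.2 → x.1 = y.1)
    (hT : ∀ x ∈ 𝓐, T ≤ (𝓐.filter (fun y => Rel x y)).card)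
    (hd : 3 * 𝓐.card ≤ (d + 1) ^ 2) (hTd : 12 * d < T) (hp : 6 * d + 1 < p) :
    ∃ x ∈ 𝓐, ∃ e g f h : F, T ≤ 3 * d +
      (𝓐.filter (fun y => y.1 = e * y.2.2 + g ∧ y.2.1 = f * y.2.2 + h)).card := by
  have hcr := card_crossings 𝓐 T hpar hT
  -- minimal surface
  obtain ⟨Q, ⟨hQ0, hQv⟩, hmin⟩ : ∃ Q : MvPolynomial (Fin 3) F,
      (Q ≠ 0 ∧ ∀ x ∈ 𝓐, L1 x Q = 0) ∧
      ∀ Q' : MvPolynomial (Fin 3) F, (Q' ≠ 0 ∧ ∀ x ∈ 𝓐, L1 x Q' = 0) →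
        Q.totalDegree ≤ Q'.totalDegree := by
    obtain ⟨Q, hQ0, -, hQv⟩ := exists_surface 𝓐 d hd
    let s : Set (MvPolynomial (Fin 3) F) := {Q | Q ≠ 0 ∧ ∀ x ∈ 𝓐, L1 x Q = 0}
    have hs : s.Nonempty := ⟨Q, hQ0, hQv⟩
    refine ⟨Function.argminOn totalDegree s hs, Function.argminOn_mem _ s hs, ?_⟩
    intro Q' hQ'
    exact Function.argminOn_le totalDegree s hQ'
  have hD : Q.totalDegree ≤ 3 * d := by
    obtain ⟨Q', hQ0', hdeg, hQv'⟩ := exists_surface 𝓐 d hd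
    exact (hmin Q' ⟨hQ0', hQv'⟩).trans hdeg
  set D := 3 * d with hDdef
  obtain ⟨x0, hx0⟩ := hne
  have hS0 : pderiv 2 Q ≠ 0 := by
    refine pderiv_ne_zero (p := p) Q hQ0 (by omega) 𝓐
      ((𝓐.filter (fun y => Rel x0 y)).image (fun y => y.2.2)) ?_ ?_ hQv
    · intro w hw
      obtain ⟨y, hy, rfl⟩ := Finset.mem_image.mp hw
      exact ⟨y, (Finset.mem_filter.mp hy).1, rfl⟩
    · have := hcr x0 hx0
      omega
  obtain ⟨x, hx, hxS⟩ : ∃ x ∈ 𝓐, L1 x (pderiv 2 Q) ≠ 0 := by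
    by_contra hcon
    push Not at hcon
    have h1 := hmin _ ⟨hS0, hcon⟩
    have h2 := totalDegree_pderiv_add_one 2 Q hS0
    omega
  have hQv2 := van12 𝓐 T hcr Q (by omega) hQv
  have dg : ∀ i, (pderiv i Q).totalDegree ≤ D := fun i => (totalDegree_pderiv_le i Q).trans hD
  have dg2 : ∀ i j, (pderiv i (pderiv j Q)).totalDegree ≤ D :=
    fun i j => (totalDegree_pderiv_le i _).trans (dg j)
  -- tangency
  have tan1 : ∀ y ∈ 𝓐, L1 y (pderiv 0 Q) = -(Polynomial.C y.1 * L1 y (pderiv 2 Q)) := by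
    intro y hy
    have := L1_der y Q
    rw [hQv y hy, Polynomial.derivative_zero] at this
    linear_combination -this
  have tan2 : ∀ y ∈ 𝓐, L2 y (pderiv 1 Q) = -(Polynomial.C y.1 * L2 y (pderiv 2 Q)) := by
    intro y hy
    have := L2_der y Q
    rw [hQv2 y hy, Polynomial.derivative_zero] at this
    linear_combination -this
  have hcomm := comm_identity Q
  set S := pderiv 2 Q with hS
  set T1 := S ^ 2 * pderiv 0 (pderiv 0 Q) - 2 * S * pderiv 0 Q * pderiv 0 S
      + (pderiv 0 Q) ^ 2 * pderiv 2 S with hT1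
  have dgT1 : T1.totalDegree ≤ D + D + D := by
    have dg0 := dg 0
    have dg2' := dg 2
    refine td_add (td_sub ?_ ?_) ?_
    · rw [pow_two]; exact td_mul (td_mul dg2' dg2') (dg2 0 0)
    · refine td_mul (td_mul ?_ dg0) (dg2 0 2)
      have h2 : (2 : MvPolynomial (Fin 3) F).totalDegree ≤ 0 := by
        rw [show (2 : MvPolynomial (Fin 3) F) = C 2 from (map_ofNat C 2).symm, totalDegree_C]
      simpa using td_mul h2 dg2'
    · rw [pow_two]; exact td_mul (td_mul dg0 dg0) (dg2 2 2)
  have vT1 : ∀ y ∈ 𝓐, L1 y T1 = 0 := by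
    intro y hy
    have h1 := tan1 y hy
    have h2 := congrArg Polynomial.derivative h1
    rw [L1_der, Polynomial.derivative_neg, Polynomial.derivative_C_mul, L1_der] at h2
    rw [pderiv_pderiv_comm' Q 2 0] at h2
    simp only [hT1, map_add, map_sub, map_mul, map_pow, map_ofNat]
    rw [h1]
    linear_combination (L1 y S) ^ 2 * h2
  have vT1' := van12 𝓐 T hcr T1 (by omega) vT1
  -- the w-derivative of T1
  have vdw2 : ∀ y ∈ 𝓐, L2 y (S * pderiv 1 T1 - pderiv 1 Q * pderiv 2 T1) = 0 := by
    intro y hy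
    have h1 := L2_der y T1
    rw [vT1' y hy, Polynomial.derivative_zero] at h1
    simp only [map_sub, map_mul]
    rw [tan2 y hy]
    linear_combination -(L2 y S) * h1
  have vdw1 := van21 𝓐 T hcr _ (by
    have : (S * pderiv 1 T1 - pderiv 1 Q * pderiv 2 T1).totalDegree ≤ D + (D + D + D) :=
      td_sub (td_mul (dg 2) ((totalDegree_pderiv_le 1 _).trans dgT1))
        (td_mul (dg 1) ((totalDegree_pderiv_le 2 _).trans dgT1))
    omega) vdw2 x hx
  -- restrict the identity to the line of x
  have hr := congrArg (L1 x) hcomm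
  have rdv : ∀ P, L1 x (S * pderiv 0 P - pderiv 0 Q * pderiv 2 P)
      = L1 x S * Polynomial.derivative (L1 x P) := by
    intro P
    rw [L1_der, map_sub, map_mul, map_mul, tan1 x hx]
    ring
  rw [map_sub (L1 x), map_sub (L1 x), map_mul (L1 x), map_mul (L1 x), map_mul (L1 x),
    map_mul (L1 x), map_mul (L1 x) (3 * T1), map_mul (L1 x) 3 T1, vT1 x hx, vdw1, rdv, rdv] at hr
  rw [map_sub (L1 x), map_mul (L1 x), map_mul (L1 x), rdv, rdv, map_ofNat] at hr
  set σ := L1 x S with hσ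
  set n := - L1 x (pderiv 1 Q) with hn
  have hQn : L1 x (pderiv 1 Q) = -n := by rw [hn, neg_neg]
  rw [hQn] at hr
  obtain ⟨e, g, heg⟩ := affine_of_second (p := p) n σ D hxS
    (by rw [hn, Polynomial.natDegree_neg]; exact (L1_deg _ _).trans (dg 1))
    ((L1_deg _ _).trans (dg 2)) (by omega) (by
      have h0 : σ ^ 2 * (σ * Polynomial.derivative (σ * Polynomial.derivative n - n * Polynomial.derivative σ)
      - 2 * Polynomial.derivative σ *
        (σ * Polynomial.derivative n - n * Polynomial.derivative σ)) = 0 := by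
        simp only [Polynomial.derivative_sub, Polynomial.derivative_mul,
          Polynomial.derivative_neg] at hr ⊢
        linear_combination -hr
      rcases mul_eq_zero.mp h0 with h | h
      · exact absurd h (pow_ne_zero _ hxS)
      · exact sub_eq_zero.mp h)
  refine ⟨x, hx, e, g, x.1 - x.2.2 * e, x.2.1 - x.2.2 * g, ?_⟩
  refine (hT x hx).trans ?_
  -- split the neighbours
  have hroots : ((𝓐.filter (fun y => Rel x y)).filter
      (fun y => σ.eval y.2.2 = 0)).card ≤ D := by
    by_contra hcon
    push Not at hcon
    apply hxS
    refine Polynomial.eq_zero_of_natDegree_lt_card_of_eval_eq_zero' _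
      (((𝓐.filter (fun y => Rel x y)).filter
      (fun y => σ.eval y.2.2 = 0)).image (fun y => y.2.2)) ?_ ?_
    · intro t ht
      obtain ⟨y, hy, rfl⟩ := Finset.mem_image.mp ht
      exact (Finset.mem_filter.mp hy).2
    · rw [Finset.card_image_of_injOn]
      · exact ((L1_deg _ _).trans (dg 2)).trans_lt hcon
      · rintro ⟨a, b, c⟩ hy ⟨a', b', c'⟩ hz h
        simp only [Finset.mem_coe, Finset.mem_filter] at hy hz h
        unfold Rel at hy hz
        simp only at hy hz
        have h1 := hpar _ hy.1.1 _ hz.1.1 h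
        simp only at h1
        subst h1 h
        have : b = b' := by linear_combination hz.1.2 - hy.1.2
        rw [this]
  rw [← Finset.card_filter_add_card_filter_not (s := 𝓐.filter (fun y => Rel x y))
    (fun y => σ.eval y.2.2 = 0)]
  refine add_le_add hroots (Finset.card_le_card ?_)
  intro y hy
  simp only [Finset.mem_filter] at hy ⊢
  obtain ⟨⟨hy, hrel⟩, hσy⟩ := hy
  have t2 := congrArg (Polynomial.eval x.2.2) (tan2 y hy)
  rw [Polynomial.eval_neg, Polynomial.eval_mul, Polynomial.eval_C, L2_eval, L2_eval] at t2
  unfold Rel at hrel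
  rw [← hrel, ← L1_eval, ← L1_eval, hQn, heg] at t2
  simp only [Polynomial.eval_neg, Polynomial.eval_mul, Polynomial.eval_add, Polynomial.eval_C,
    Polynomial.eval_X] at t2
  have hy1 : y.1 = e * y.2.2 + g := by
    apply mul_right_cancel₀ hσy
    linear_combination t2
  refine ⟨hy, hy1, ?_⟩
  linear_combination -hrel - x.2.2 * hy1
end
end RudnevAux

namespace RudnevAux

open Classical in
/-- pruning a dense symmetric graph to one with large minimal degree -/
lemma prune {α : Type*} (r : α → α → Prop) (hr : ∀ x y, r x y → r y x) (T : ℕ)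
    (I : Finset α) (h : 2 * T * I.card < ((I ×ˢ I).filter (fun z => r z.1 z.2)).card) :
    ∃ J ⊆ I, J.Nonempty ∧ ∀ x ∈ J, T ≤ (J.filter (fun y => r x y)).card := by
  induction I using Finset.strongInduction with
  | H I ih =>
    by_cases hall : ∀ x ∈ I, T ≤ (I.filter (fun y => r x y)).card
    · refine ⟨I, subset_rfl, ?_, hall⟩
      rw [Finset.nonempty_iff_ne_empty]
      rintro rfl
      simp at h
    · push Not at hall
      obtain ⟨x, hx, hxT⟩ := hall
      obtain ⟨J, hJ, hne, hdeg⟩ := ih (I.erase x) (Finset.erase_ssubset hx) (by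
        have hsub : (I ×ˢ I).filter (fun z => r z.1 z.2) ⊆
            ((I.erase x ×ˢ I.erase x).filter (fun z => r z.1 z.2)) ∪
            (((I.filter (fun y => r x y)).image (fun y => (x, y))) ∪
            ((I.filter (fun y => r x y)).image (fun y => (y, x)))) := by
          rintro ⟨y, z⟩ hyz
          simp only [Finset.mem_filter, Finset.mem_product] at hyz
          obtain ⟨⟨hy, hz⟩, hr1⟩ := hyz
          simp only [Finset.mem_union, Finset.mem_filter, Finset.mem_product, Finset.mem_erase,
            Finset.mem_image, Prod.mk.injEq]
          by_cases h1 : y = x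
          · right; left
            exact ⟨z, ⟨hz, h1 ▸ hr1⟩, h1.symm, rfl⟩
          · by_cases h2 : z = x
            · right; right
              exact ⟨y, ⟨hy, hr _ _ (h2 ▸ hr1)⟩, rfl, h2.symm⟩
            · left
              exact ⟨⟨⟨h1, hy⟩, h2, hz⟩, hr1⟩
        have h1 := Finset.card_le_card hsub
        have h2 := Finset.card_union_le
          ((I.erase x ×ˢ I.erase x).filter (fun z => r z.1 z.2))
            (((I.filter (fun y => r x y)).image (fun y => (x, y))) ∪
            ((I.filter (fun y => r x y)).image (fun y => (y, x))))
        have h3 := Finset.card_union_le ((I.filter (fun y => r x y)).image (fun y => (x, y)))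
            ((I.filter (fun y => r x y)).image (fun y => (y, x)))
        have h4 := Finset.card_image_le (s := I.filter (fun y => r x y)) (f := fun y => (x, y))
        have h5 := Finset.card_image_le (s := I.filter (fun y => r x y)) (f := fun y => (y, x))
        have h6 := Finset.card_erase_add_one hx
        rw [← h6] at h
        ring_nf at h ⊢
        omega)
      exact ⟨J, hJ.trans (Finset.erase_subset _ _), hne, hdeg⟩

section
variable {p : ℕ} [Fact p.Prime]

/-- Cauchy-Schwarz lower bound for the number of crossing pairs -/
lemma crossing_pairs (U : Finset (ZMod p)) (𝓛 : Finset (ZMod p × ZMod p)) (k : ℕ)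
    (hk : ∀ l ∈ 𝓛, k ≤ (U.filter (fun a => l.1 * a + l.2 ∈ U)).card) :
    (𝓛.card * k) ^ 2 ≤ U.card *
      (((U ×ˢ 𝓛) ×ˢ (U ×ˢ 𝓛)).filter (fun z =>
        z.1.2.1 * z.2.1 + z.1.2.2 = z.2.2.1 * z.1.1 + z.2.2.2)).card := by
  set G : ZMod p → Finset (ZMod p × ZMod p × ZMod p) :=
    fun b => (U ×ˢ 𝓛).filter (fun z => z.2.1 * z.1 + z.2.2 = b) with hG
  have h1 : 𝓛.card * k ≤ ∑ b ∈ U, (G b).card := by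
    set W := (U ×ˢ 𝓛).filter (fun z => z.2.1 * z.1 + z.2.2 ∈ U) with hW
    have e1 : W.card = ∑ b ∈ U, (G b).card := by
      rw [Finset.card_eq_sum_card_fiberwise (f := fun z => z.2.1 * z.1 + z.2.2) (t := U)]
      · refine Finset.sum_congr rfl fun b hb => ?_
        congr 1
        ext z
        simp only [hW, hG, Finset.mem_filter]
        constructor
        · rintro ⟨⟨h, -⟩, h'⟩; exact ⟨h, h'⟩
        · rintro ⟨h, rfl⟩; exact ⟨⟨h, hb⟩, rfl⟩
      · intro z hz
        exact (Finset.mem_filter.mp (Finset.mem_coe.mp hz)).2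
    have e2 : W.card = ∑ l ∈ 𝓛, (W.filter (fun z => z.2 = l)).card := by
      rw [Finset.card_eq_sum_card_fiberwise (f := fun z => z.2) (t := 𝓛)]
      intro z hz
      exact (Finset.mem_product.mp (Finset.mem_filter.mp (Finset.mem_coe.mp hz)).1).2
    rw [← e1, e2, ← smul_eq_mul, ← Finset.sum_const]
    refine Finset.sum_le_sum fun l hl => (hk l hl).trans ?_
    refine Finset.card_le_card_of_injOn (fun a => (a, l)) ?_ ?_
    · intro a ha
      simp only [Finset.mem_coe, Finset.mem_filter] at ha
      simp only [hW, Finset.mem_coe, Finset.mem_filter, Finset.mem_product]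
      exact ⟨⟨⟨ha.1, hl⟩, ha.2⟩, trivial⟩
    · intro a _ b _ h
      exact (Prod.mk.inj h).1
  have h2 : (∑ b ∈ U, (G b).card) ^ 2 ≤ U.card * ∑ b ∈ U, (G b).card ^ 2 :=
    sq_sum_le_card_mul_sum_sq
  refine (Nat.pow_le_pow_left h1 2).trans (h2.trans (Nat.mul_le_mul_left _ ?_))
  have h3 : ∑ b ∈ U, (G b).card ^ 2 = (U.sigma (fun b => G b ×ˢ G b)).card := by
    rw [Finset.card_sigma]
    refine Finset.sum_congr rfl fun b _ => ?_
    rw [Finset.card_product, pow_two]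
  rw [h3]
  refine Finset.card_le_card_of_injOn
    (fun s => ((s.2.2.1, s.2.1.2), (s.2.1.1, s.2.2.2))) ?_ ?_
  · rintro ⟨b, z, z'⟩ h
    simp only [hG, Finset.mem_coe, Finset.mem_sigma, Finset.mem_product, Finset.mem_filter] at h ⊢
    obtain ⟨-, ⟨⟨h1, h2⟩, h3⟩, ⟨h4, h5⟩, h6⟩ := h
    exact ⟨⟨⟨h4, h2⟩, h1, h5⟩, by rw [h3, h6]⟩
  · rintro ⟨b, z, z'⟩ h ⟨b2, w, w'⟩ h' heq
    simp only [hG, Finset.mem_coe, Finset.mem_sigma, Finset.mem_product, Finset.mem_filter] at h h'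
    simp only [Prod.mk.injEq] at heq
    obtain ⟨⟨e1, e2⟩, e3, e4⟩ := heq
    have hz : z = w := Prod.ext e3 e2
    have hz' : z' = w' := Prod.ext e1 e4
    subst hz hz'
    have : b = b2 := by rw [← h.2.1.2, ← h'.2.1.2]
    subst this
    rfl

open Classical in
/-- counting the exceptional points on a single line -/
lemma collinear_count {F : Type*} [Field F] (φ : ZMod p →+* F) (θ : F)
    (U : Finset (ZMod p)) (𝓛 : Finset (ZMod p × ZMod p)) (k : ℕ)
    (hk : ∀ l ∈ 𝓛, k ≤ (U.filter (fun a => l.1 * a + l.2 ∈ U)).card) (e g f h : F) (M : ℕ)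
    (hM : M ≤ ((U ×ˢ 𝓛).filter (fun z => φ z.2.1 = e * (φ z.1 + θ * φ z.2.1) + g ∧
      φ z.2.2 = f * (φ z.1 + θ * φ z.2.1) + h)).card) :
    M ≤ U.card ∨ M * (k - 1) ≤ U.card ^ 2 := by
  have hφ := φ.injective
  by_cases he : 1 - e * θ = 0
  · right
    have he0 : e ≠ 0 := by
      rintro rfl
      simp at he
    -- all the points have the same first coordinate
    set κ : F := f * (-g / e) + h with hκ
    set μ : F := f * θ with hμ
    set 𝓛' := 𝓛.filter (fun l => φ l.2 = κ + μ * φ l.1) with h𝓛'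
    have ha : ∀ z : ZMod p × ZMod p × ZMod p, φ z.2.1 = e * (φ z.1 + θ * φ z.2.1) + g →
        φ z.1 = -g / e := by
      intro z hz
      rw [eq_div_iff he0]
      linear_combination -hz + φ z.2.1 * he
    have hM' : M ≤ 𝓛'.card := by
      refine hM.trans (Finset.card_le_card_of_injOn (fun z => z.2) ?_ ?_)
      · intro z hz
        simp only [Finset.mem_coe, Finset.mem_filter, Finset.mem_product, h𝓛'] at hz ⊢
        refine ⟨hz.1.2, ?_⟩
        rw [hz.2.2, ha z hz.2.1]
        ring
      · intro z hz w hw hzw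
        simp only [Finset.mem_coe, Finset.mem_filter, Finset.mem_product] at hz hw
        refine Prod.ext (hφ ?_) hzw
        rw [ha z hz.2.1, ha w hw.2.1]
    refine (Nat.mul_le_mul_right _ hM').trans ?_
    rw [pow_two, ← Finset.card_product]
    have h1 : 𝓛'.card * (k - 1) ≤
        (𝓛'.sigma (fun l => U.filter (fun a => l.1 * a + l.2 ∈ U ∧ φ a ≠ -μ))).card := by
      rw [Finset.card_sigma, ← smul_eq_mul, ← Finset.sum_const]
      refine Finset.sum_le_sum fun l hl => ?_
      have h2 := hk l (Finset.mem_filter.mp hl).1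
      have h3 : (U.filter (fun a => l.1 * a + l.2 ∈ U)).card ≤
          (U.filter (fun a => l.1 * a + l.2 ∈ U ∧ φ a ≠ -μ)).card + 1 := by
        rw [← Finset.card_filter_add_card_filter_not
          (s := U.filter (fun a => l.1 * a + l.2 ∈ U)) (fun a => φ a ≠ -μ)]
        rw [Finset.filter_filter]
        refine Nat.add_le_add_left ?_ _
        rw [Finset.card_le_one]
        intro a ha b hb
        simp only [Finset.mem_filter, not_not] at ha hb
        exact hφ (ha.2.trans hb.2.symm)
      omega
    refine h1.trans (Finset.card_le_card_of_injOn (fun s => (s.2, s.1.1 * s.2 + s.1.2)) ?_ ?_)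
    · rintro ⟨l, a⟩ hs
      simp only [Finset.mem_coe, Finset.mem_sigma, Finset.mem_filter, Finset.mem_product] at hs ⊢
      exact ⟨hs.2.1, hs.2.2.1⟩
    · rintro ⟨⟨c, d⟩, a⟩ hs ⟨⟨c', d'⟩, a'⟩ hs' heq
      simp only [Finset.mem_coe, Finset.mem_sigma, Finset.mem_filter, h𝓛'] at hs hs'
      simp only [Prod.mk.injEq] at heq
      obtain ⟨rfl, heq⟩ := heq
      have h2 := congrArg φ heq
      rw [map_add, map_add, map_mul, map_mul, hs.1.2, hs'.1.2] at h2
      have h3 : φ a + μ ≠ 0 := fun h0 => hs.2.2.2 (by linear_combination h0)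
      have h4 : c = c' := by
        apply hφ
        apply mul_right_cancel₀ h3
        linear_combination h2
      subst h4
      have h5 : d = d' := by linear_combination heq
      subst h5
      rfl
  · left
    refine hM.trans (Finset.card_le_card_of_injOn (fun z => z.1) ?_ ?_)
    · intro z hz
      simp only [Finset.mem_coe, Finset.mem_filter, Finset.mem_product] at hz ⊢
      exact hz.1.1
    · rintro ⟨a, c, d⟩ hz ⟨a', c', d'⟩ hw hzw
      simp only [Finset.mem_coe, Finset.mem_filter, Finset.mem_product] at hz hw hzw
      subst hzw
      have h4 : c = c' := by
        apply hφ
        apply mul_right_cancel₀ he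
        linear_combination hz.2.1 - hw.2.1
      subst h4
      have h5 : d = d' := by
        apply hφ
        rw [hz.2.2, hw.2.2]
      subst h5
      rfl

set_option maxHeartbeats 800000 in
open Classical in
/-- bound on the number of rich lines -/
theorem rich_lines (U : Finset (ZMod p)) (𝓛 : Finset (ZMod p × ZMod p)) (k : ℕ) (hk2 : 2 ≤ k)
    (hk : ∀ l ∈ 𝓛, k ≤ (U.filter (fun a => l.1 * a + l.2 ∈ U)).card)
    (hp : 200 * (U.card * 𝓛.card) ≤ p ^ 2) :
    𝓛.card * k ^ 4 ≤ 2 ^ 15 * U.card ^ 5 := by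
  by_contra hcon
  push Not at hcon
  set q := U.card with hq
  set m := 𝓛.card with hm
  have hm0 : 0 < m := by
    rcases Nat.eq_zero_or_pos m with h | h
    · rw [h] at hcon; simp at hcon
    · exact h
  obtain ⟨l0, hl0⟩ := Finset.card_pos.mp hm0
  have hkq : k ≤ q := (hk l0 hl0).trans (Finset.card_le_card (Finset.filter_subset _ _))
  -- the field and the parameter θ
  set F := AlgebraicClosure (ZMod p)
  set φ : ZMod p →+* F := algebraMap (ZMod p) F with hφdef
  have hφ : Function.Injective φ := φ.injective
  have : Infinite F := IsAlgClosed.instInfinite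
  have : CharP F p := charP_of_injective_algebraMap hφ p
  obtain ⟨θ, hθ⟩ := Infinite.exists_notMem_finset (Finset.univ.image φ)
  have hθ' : ∀ a c a' c' : ZMod p, φ a + θ * φ c = φ a' + θ * φ c' → c = c' := by
    intro a c a' c' h
    by_contra hne
    apply hθ
    refine Finset.mem_image.mpr ⟨(a' - a) / (c - c'), Finset.mem_univ _, ?_⟩
    have h1 : φ c - φ c' ≠ 0 := by
      rw [sub_ne_zero]; exact fun h => hne (hφ h)
    rw [map_div₀, map_sub, map_sub, div_eq_iff h1]
    linear_combination -h
  set T := m * k ^ 2 / (4 * q ^ 2) with hT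
  set d := Nat.sqrt (3 * (q * m)) with hd
  have hq0 : 0 < q := by omega
  have hd2 : d ^ 2 ≤ 3 * (q * m) := Nat.sqrt_le' _
  have hd3 : 3 * (q * m) < (d + 1) ^ 2 := Nat.lt_succ_sqrt' _
  have hd0 : 1 ≤ d := by
    rw [hd, Nat.le_sqrt']
    have := Nat.mul_pos hq0 hm0
    omega
  have hdp : 6 * d + 1 < p := by
    have : 7 * d < p := by
      apply lt_of_pow_lt_pow_left₀ 2 (Nat.zero_le _)
      have := Nat.mul_pos hq0 hm0
      rw [mul_pow]
      omega
    omega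
  -- numerical bounds
  have hT1 : T * (4 * q ^ 2) ≤ m * k ^ 2 := Nat.div_mul_le_self _ _
  have b1 : 2 ^ 15 * q ^ 3 ≤ m * k ^ 2 := by
    have h1 : k ^ 2 ≤ q ^ 2 := Nat.pow_le_pow_left hkq 2
    have h2 : 2 ^ 15 * q ^ 3 * q ^ 2 ≤ m * k ^ 2 * q ^ 2 := by
      calc 2 ^ 15 * q ^ 3 * q ^ 2 = 2 ^ 15 * q ^ 5 := by ring
        _ ≤ m * k ^ 4 := hcon.le
        _ = m * k ^ 2 * k ^ 2 := by ring
        _ ≤ _ := Nat.mul_le_mul_left _ h1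
    exact Nat.le_of_mul_le_mul_right h2 (by positivity)
  have hT2 : m * k ^ 2 ≤ 8 * q ^ 2 * T := by
    have h1 : m * k ^ 2 < (T + 1) * (4 * q ^ 2) := by
      have := Nat.lt_div_mul_add (a := m * k ^ 2) (b := 4 * q ^ 2) (by positivity)
      rw [← hT] at this
      linarith
    have h2 : 8 * q ^ 2 ≤ m * k ^ 2 := by
      refine le_trans ?_ b1
      nlinarith [pow_pos hq0 2]
    nlinarith
  have b2 : 2 ^ 12 * q ≤ T := by
    have : 8 * q ^ 2 * (2 ^ 12 * q) ≤ 8 * q ^ 2 * T := by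
      refine le_trans (le_of_eq ?_) (b1.trans hT2)
      ring
    exact Nat.le_of_mul_le_mul_left this (by positivity)
  have b3 : 2 ^ 9 * (m * q) ≤ T ^ 2 := by
    have h1 : (m * k ^ 2) ^ 2 ≤ (8 * q ^ 2 * T) ^ 2 := Nat.pow_le_pow_left hT2 2
    have h2 : 64 * q ^ 4 * (2 ^ 9 * (m * q)) ≤ 64 * q ^ 4 * T ^ 2 := by
      calc 64 * q ^ 4 * (2 ^ 9 * (m * q)) = m * (2 ^ 15 * q ^ 5) := by ring
        _ ≤ m * (m * k ^ 4) := Nat.mul_le_mul_left _ hcon.le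
        _ = (m * k ^ 2) ^ 2 := by ring
        _ ≤ _ := h1
        _ = _ := by ring
    exact Nat.le_of_mul_le_mul_left h2 (by positivity)
  have b4 : 12 * d < T := by
    apply lt_of_pow_lt_pow_left₀ 2 (Nat.zero_le _)
    have := Nat.mul_pos hq0 hm0
    rw [mul_comm m q] at b3
    rw [mul_pow]
    omega
  have b5 : 2 ^ 12 * q ^ 2 ≤ T * k := by
    have h2 : 8 * q ^ 3 * (2 ^ 12 * q ^ 2) ≤ 8 * q ^ 3 * (T * k) := by
      calc 8 * q ^ 3 * (2 ^ 12 * q ^ 2) = 2 ^ 15 * q ^ 5 := by ring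
        _ ≤ m * k ^ 4 := hcon.le
        _ = (m * k ^ 2) * (k * k) := by ring
        _ ≤ (8 * q ^ 2 * T) * (q * k) :=
          Nat.mul_le_mul hT2 (Nat.mul_le_mul_right _ hkq)
        _ = _ := by ring
    exact Nat.le_of_mul_le_mul_left h2 (by positivity)
  -- pruning
  set I := U ×ˢ 𝓛 with hI
  have hIcard : I.card = q * m := Finset.card_product _ _
  obtain ⟨J, hJI, hJne, hJ⟩ := prune
    (fun z w : ZMod p × ZMod p × ZMod p => z.2.1 * w.1 + z.2.2 = w.2.1 * z.1 + w.2.2)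
    (fun z w h => h.symm) T I (by
      have h1 := crossing_pairs U 𝓛 k hk
      rw [← hI, ← hq, ← hm] at h1
      rw [hIcard]
      have h2 : q * (2 * T * (q * m)) < (m * k) ^ 2 := by
        have : 2 * (q * (2 * T * (q * m))) ≤ (m * k) ^ 2 := by
          calc 2 * (q * (2 * T * (q * m))) = (T * (4 * q ^ 2)) * m := by ring
            _ ≤ (m * k ^ 2) * m := Nat.mul_le_mul_right _ hT1
            _ = _ := by ring
        have : 0 < (m * k) ^ 2 := by positivity
        omega
      have h3 := h2.trans_le h1
      convert Nat.lt_of_mul_lt_mul_left h3)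
  set ψ : ZMod p × ZMod p × ZMod p → F × F × F :=
    fun z => (φ z.2.1, φ z.2.2, φ z.1 + θ * φ z.2.1) with hψ
  have hψinj : Function.Injective ψ := by
    rintro ⟨a, c, e⟩ ⟨a', c', e'⟩ h
    simp only [hψ, Prod.mk.injEq] at h
    obtain ⟨h1, h2, h3⟩ := h
    have h1 := hφ h1
    have h2 := hφ h2
    subst h1 h2
    have : a = a' := hφ (by linear_combination h3)
    rw [this]
  have hrel : ∀ z w, Rel (ψ z) (ψ w) ↔ z.2.1 * w.1 + z.2.2 = w.2.1 * z.1 + w.2.2 := by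
    intro z w
    unfold Rel
    simp only [hψ]
    constructor
    · intro h
      apply hφ
      simp only [map_add, map_mul]
      linear_combination h
    · intro h
      have := congrArg φ h
      simp only [map_add, map_mul] at this
      linear_combination this
  obtain ⟨-, -, e, g, f, h, hcount⟩ := incidence (p := p) (J.image ψ) (hJne.image ψ) T d (by
      intro x hx y hy hxy
      obtain ⟨z, -, rfl⟩ := Finset.mem_image.mp hx
      obtain ⟨w, -, rfl⟩ := Finset.mem_image.mp hy
      exact congrArg φ (hθ' _ _ _ _ hxy))
    (by
      intro x hx
      obtain ⟨z, hz, rfl⟩ := Finset.mem_image.mp hx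
      refine (hJ z hz).trans ?_
      refine Finset.card_le_card_of_injOn ψ ?_ hψinj.injOn
      intro w hw
      simp only [Finset.mem_coe, Finset.mem_filter] at hw ⊢
      exact ⟨Finset.mem_image_of_mem _ hw.1, (hrel z w).mpr hw.2⟩)
    (by
      rw [Finset.card_image_of_injective _ hψinj]
      have := Finset.card_le_card hJI
      rw [hIcard] at this
      omega) b4 hdp
  have hfin := collinear_count φ θ U 𝓛 k hk e g f h (T - 3 * d) (by
    have : ((J.image ψ).filter (fun y => y.1 = e * y.2.2 + g ∧ y.2.1 = f * y.2.2 + h)).card ≤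
      ((U ×ˢ 𝓛).filter (fun z => φ z.2.1 = e * (φ z.1 + θ * φ z.2.1) + g ∧
      φ z.2.2 = f * (φ z.1 + θ * φ z.2.1) + h)).card := by
      refine le_trans (Finset.card_le_card ?_) (Finset.card_image_le (f := ψ))
      intro y hy
      simp only [Finset.mem_filter] at hy
      obtain ⟨z, hz, rfl⟩ := Finset.mem_image.mp hy.1
      refine Finset.mem_image_of_mem _ ?_
      exact Finset.mem_filter.mpr ⟨hJI hz, hy.2⟩
    omega)
  rw [← hq] at hfin
  rcases hfin with hfin | hfin
  · omega
  · have h1 : T ≤ 2 * (T - 3 * d) := by omega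
    have h2 : k ≤ 2 * (k - 1) := by omega
    have h3 := Nat.mul_le_mul h1 h2
    have h4 : 2 * (T - 3 * d) * (2 * (k - 1)) = 4 * ((T - 3 * d) * (k - 1)) := by ring
    have h5 : 0 < q ^ 2 := by positivity
    rw [h4] at h3
    have h6 := b5.trans (h3.trans (Nat.mul_le_mul_left 4 hfin))
    omega
end
end RudnevAux

namespace RudnevAux

open Classical in
lemma layer {α : Type*} (s : Finset α) (f : α → ℕ) (N k : ℕ) (hf : ∀ x ∈ s, f x ≤ N) :
    ∑ x ∈ s, (f x - k) = ∑ j ∈ Finset.Ioc k N, (s.filter (fun x => j ≤ f x)).card := by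
  have h1 : ∀ x ∈ s, f x - k = ∑ j ∈ Finset.Ioc k N, if j ≤ f x then 1 else 0 := by
    intro x hx
    rw [← Finset.card_filter]
    have : (Finset.Ioc k N).filter (fun j => j ≤ f x) = Finset.Ioc k (f x) := by
      ext j
      have := hf x hx
      simp only [Finset.mem_filter, Finset.mem_Ioc]
      omega
    rw [this, Nat.card_Ioc]
  rw [Finset.sum_congr rfl h1, Finset.sum_comm]
  simp only [Finset.card_filter]

section
variable {p : ℕ} [Fact p.Prime]

/-- the family of affine lines attached to the ratios in S -/
def lines (A S : Finset (ZMod p)) : Finset (ZMod p × ZMod p) :=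
  (S ×ˢ A ×ˢ A).image (fun z => (z.1, z.2.1 - z.1 * z.2.2))

/-- richness of a line -/
def rich (A : Finset (ZMod p)) (l : ZMod p × ZMod p) : ℕ :=
  (A.filter (fun a => l.1 * a + l.2 ∈ A)).card

lemma sum_rich (A S : Finset (ZMod p)) :
    ∑ l ∈ lines A S, rich A l = S.card * A.card ^ 2 := by
  have h0 : S.card * A.card ^ 2 = (S ×ˢ A ×ˢ A).card := by
    rw [Finset.card_product, Finset.card_product, pow_two]
  have h1 : ∑ l ∈ lines A S, rich A l =
      ((lines A S).sigma (fun l => A.filter (fun a => l.1 * a + l.2 ∈ A))).card := by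
    rw [Finset.card_sigma]; rfl
  rw [h0, h1]
  apply le_antisymm
  · refine Finset.card_le_card_of_injOn (fun s => (s.1.1, s.1.1 * s.2 + s.1.2, s.2)) ?_ ?_
    · rintro ⟨l, a⟩ hs
      simp only [lines, Finset.mem_coe, Finset.mem_sigma, Finset.mem_filter, Finset.mem_product,
        Finset.mem_image] at hs ⊢
      obtain ⟨⟨z, hz, rfl⟩, ha, hb⟩ := hs
      exact ⟨hz.1, hb, ha⟩
    · rintro ⟨⟨c, d⟩, a⟩ hs ⟨⟨c', d'⟩, a'⟩ hs' heq
      simp only [Prod.mk.injEq] at heq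
      obtain ⟨rfl, h2, rfl⟩ := heq
      have : d = d' := by linear_combination h2
      subst this
      rfl
  · refine Finset.card_le_card_of_injOn
      (fun z => (⟨(z.1, z.2.1 - z.1 * z.2.2), z.2.2⟩ : (_ : ZMod p × ZMod p) × ZMod p)) ?_ ?_
    · rintro ⟨x, c, c'⟩ hz
      have hz' := hz
      simp only [Finset.mem_coe, Finset.mem_product] at hz
      simp only [lines, Finset.mem_coe, Finset.mem_sigma, Finset.mem_filter]
      refine ⟨Finset.mem_image.mpr ⟨_, hz', rfl⟩, hz.2.2, ?_⟩
      convert hz.2.1 using 1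
      ring
    · rintro ⟨x, c, c'⟩ hz ⟨x', d, d'⟩ hz' heq
      simp only [Sigma.mk.injEq, Prod.mk.injEq, heq_eq_eq] at heq
      obtain ⟨⟨rfl, h2⟩, rfl⟩ := heq
      have : c = d := by linear_combination h2
      rw [this]

lemma lines_rich (A S : Finset (ZMod p)) (t : ℕ)
    (hS : ∀ x ∈ S, t ≤ (A.filter (fun b => x * b ∈ A)).card) (l : ZMod p × ZMod p)
    (hl : l ∈ lines A S) : t ≤ ((A + A).filter (fun a => l.1 * a + l.2 ∈ A + A)).card := by
  obtain ⟨⟨x, c, c'⟩, hz, rfl⟩ := Finset.mem_image.mp hl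
  simp only [Finset.mem_product] at hz
  refine (hS x hz.1).trans (Finset.card_le_card_of_injOn (fun b => b + c') ?_ ?_)
  · intro b hb
    simp only [Finset.mem_coe, Finset.mem_filter] at hb ⊢
    refine ⟨Finset.add_mem_add hb.1 hz.2.2, ?_⟩
    convert Finset.add_mem_add hb.2 hz.2.1 using 1
    ring
  · intro a _ b _ h
    exact add_right_cancel h

lemma many_lines (A S : Finset (ZMod p)) (k : ℕ) (hk : 2 ≤ k)
    (hAp : A.card ^ 2 ≤ p) (h1 : 200 * S.card ≤ k * A.card)
    (h2 : 2 ^ 16 * A.card ^ 3 ≤ S.card * k ^ 3) :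
    S.card * A.card ^ 2 ≤ 2 * (k * (lines A S).card) := by
  classical
  set a := A.card with ha
  set n := S.card with hn
  have hsum := sum_rich A S
  rw [← ha, ← hn] at hsum
  have hM : ∀ j, k < j → ((lines A S).filter (fun l => j ≤ rich A l)).card * j ^ 4
      ≤ 2 ^ 15 * a ^ 5 := by
    intro j hj
    refine rich_lines A _ j (by omega) (fun l hl => (Finset.mem_filter.mp hl).2) ?_
    set M := ((lines A S).filter (fun l => j ≤ rich A l)).card with hMdef
    have h3 : M * j ≤ n * a ^ 2 := by
      rw [← hsum, hMdef, ← smul_eq_mul, ← Finset.sum_const]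
      refine (Finset.sum_le_sum (fun l hl => (Finset.mem_filter.mp hl).2)).trans ?_
      exact Finset.sum_le_sum_of_subset (Finset.filter_subset _ _)
    have h4 : k * (200 * (a * M)) ≤ k * a ^ 4 := by
      calc k * (200 * (a * M)) = 200 * a * (M * k) := by ring
        _ ≤ 200 * a * (M * j) := by gcongr
        _ ≤ 200 * a * (n * a ^ 2) := by gcongr
        _ = (200 * n) * a ^ 3 := by ring
        _ ≤ (k * a) * a ^ 3 := by gcongr
        _ = _ := by ring
    have h5 := Nat.le_of_mul_le_mul_left h4 (by omega)
    refine h5.trans ?_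
    calc a ^ 4 = (a ^ 2) ^ 2 := by ring
      _ ≤ p ^ 2 := Nat.pow_le_pow_left hAp 2
  have hrich : ∀ l ∈ lines A S, rich A l ≤ a := fun l _ =>
    Finset.card_le_card (Finset.filter_subset _ _)
  have hlay := layer (lines A S) (rich A) (max k a) k
    (fun l hl => (hrich l hl).trans (le_max_right _ _))
  have hup : n * a ^ 2 ≤ k * (lines A S).card + ∑ l ∈ lines A S, (rich A l - k) := by
    rw [← hsum, mul_comm, ← smul_eq_mul, ← Finset.sum_const, ← Finset.sum_add_distrib]
    exact Finset.sum_le_sum fun l _ => by omega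
  have hkR : (0 : ℝ) < k := by exact_mod_cast (by omega : 0 < k)
  have hbound : ((∑ l ∈ lines A S, (rich A l - k) : ℕ) : ℝ) ≤ 2 ^ 15 * (a : ℝ) ^ 5 / k ^ 3 := by
    rw [hlay, Nat.cast_sum]
    calc ∑ j ∈ Finset.Ioc k (max k a),
          ((((lines A S).filter (fun l => j ≤ rich A l)).card : ℕ) : ℝ)
        ≤ ∑ j ∈ Finset.Ioc k (max k a), 2 ^ 15 * (a : ℝ) ^ 5 / k ^ 2 * ((j : ℝ) ^ 2)⁻¹ := by
          refine Finset.sum_le_sum fun j hj => ?_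
          have hj := (Finset.mem_Ioc.mp hj).1
          have hjR : (k : ℝ) ≤ j := by exact_mod_cast hj.le
          have hj0 : (0 : ℝ) < j := hkR.trans_le hjR
          have := hM j hj
          have h3 : ((((lines A S).filter (fun l => j ≤ rich A l)).card : ℕ) : ℝ) * (j : ℝ) ^ 4
            ≤ 2 ^ 15 * (a : ℝ) ^ 5 := by exact_mod_cast this
          rw [← div_eq_mul_inv, div_div, le_div_iff₀ (by positivity)]
          refine le_trans ?_ h3
          have h4 : (k : ℝ) ^ 2 * (j : ℝ) ^ 2 ≤ (j : ℝ) ^ 4 := by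
            calc (k : ℝ) ^ 2 * (j : ℝ) ^ 2 ≤ (j : ℝ) ^ 2 * (j : ℝ) ^ 2 := by gcongr
              _ = _ := by ring
          gcongr
      _ = 2 ^ 15 * (a : ℝ) ^ 5 / k ^ 2 * ∑ j ∈ Finset.Ioc k (max k a), ((j : ℝ) ^ 2)⁻¹ := by
          rw [Finset.mul_sum]
      _ ≤ 2 ^ 15 * (a : ℝ) ^ 5 / k ^ 2 * (k : ℝ)⁻¹ := by
          gcongr
          refine (sum_Ioc_inv_sq_le_sub (by omega) (le_max_left _ _)).trans ?_
          have : (0 : ℝ) ≤ ((max k a : ℕ) : ℝ)⁻¹ := by positivity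
          linarith
      _ = _ := by
          field_simp
  have hb2 : 2 ^ 15 * (a : ℝ) ^ 5 / k ^ 3 ≤ n * a ^ 2 / 2 := by
    rw [div_le_div_iff₀ (by positivity) (by positivity)]
    have : (2 : ℝ) ^ 16 * a ^ 3 ≤ n * k ^ 3 := by exact_mod_cast h2
    nlinarith [mul_le_mul_of_nonneg_left this (by positivity : (0 : ℝ) ≤ (a : ℝ) ^ 2)]
  have hupR : (n : ℝ) * a ^ 2 ≤ k * (lines A S).card
      + ((∑ l ∈ lines A S, (rich A l - k) : ℕ) : ℝ) := by exact_mod_cast hup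
  have : (n : ℝ) * a ^ 2 ≤ 2 * (k * (lines A S).card) := by linarith
  exact_mod_cast this

/-- the number of popular ratios -/
theorem popular_ratios (A S : Finset (ZMod p)) (h0 : (0 : ZMod p) ∉ A) (hAp : A.card ^ 2 ≤ p)
    (t : ℕ) (hS : ∀ x ∈ S, t ≤ (A.filter (fun b => x * b ∈ A)).card) :
    S.card ^ 4 * t ^ 12 * A.card ^ 3 ≤ 2 ^ 76 * (A + A).card ^ 15 := by
  by_contra hcon
  push Not at hcon
  set a := A.card with ha
  set n := S.card with hn
  set u := (A + A).card with hu
  have hpos : 0 < n ^ 4 * t ^ 12 * a ^ 3 := (Nat.zero_le _).trans_lt hcon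
  have hn0 : 0 < n := by
    rcases Nat.eq_zero_or_pos n with h | h
    · rw [h] at hpos; simp at hpos
    · exact h
  have ht0 : 0 < t := by
    rcases Nat.eq_zero_or_pos t with h | h
    · rw [h] at hpos; simp at hpos
    · exact h
  have ha0 : 0 < a := by
    rcases Nat.eq_zero_or_pos a with h | h
    · rw [h] at hpos; simp at hpos
    · exact h
  have hau : a ≤ u := by
    obtain ⟨b, hb⟩ := Finset.card_pos.mp ha0
    exact Finset.card_le_card_add_right ⟨b, hb⟩
  obtain ⟨x0, hx0⟩ := Finset.card_pos.mp hn0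
  have hta : t ≤ a := (hS x0 hx0).trans (Finset.card_le_card (Finset.filter_subset _ _))
  have hnt : n * t ≤ a ^ 2 := by
    have h1 : n * t ≤ (S.sigma (fun x => A.filter (fun b => x * b ∈ A))).card := by
      rw [Finset.card_sigma, hn, ← smul_eq_mul, ← Finset.sum_const]
      exact Finset.sum_le_sum hS
    refine h1.trans ?_
    rw [pow_two, ha, ← Finset.card_product]
    refine Finset.card_le_card_of_injOn (fun s => (s.2, s.1 * s.2)) ?_ ?_
    · rintro ⟨x, b⟩ hs
      simp only [Finset.mem_coe, Finset.mem_sigma, Finset.mem_filter, Finset.mem_product] at hs ⊢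
      exact ⟨hs.2.1, hs.2.2⟩
    · rintro ⟨x, b⟩ hs ⟨x', b'⟩ hs' heq
      simp only [Finset.mem_coe, Finset.mem_sigma, Finset.mem_filter] at hs hs'
      simp only [Prod.mk.injEq] at heq
      obtain ⟨rfl, h2⟩ := heq
      have hb0 : b ≠ 0 := fun h => h0 (h ▸ hs.2.1)
      have : x = x' := mul_right_cancel₀ hb0 h2
      rw [this]
  have c1 : 2 ^ 19 * a ^ 3 < n * t ^ 3 := by
    apply lt_of_pow_lt_pow_left₀ 4 (Nat.zero_le _)
    have h1 : a ^ 3 * (2 ^ 19 * a ^ 3) ^ 4 < a ^ 3 * (n * t ^ 3) ^ 4 := by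
      calc a ^ 3 * (2 ^ 19 * a ^ 3) ^ 4 = 2 ^ 76 * a ^ 15 := by ring
        _ ≤ 2 ^ 76 * u ^ 15 := by gcongr
        _ < _ := hcon
        _ = _ := by ring
    exact Nat.lt_of_mul_lt_mul_left h1
  have c2 : 2 ^ 19 < n := by
    have h1 : a ^ 3 * 2 ^ 19 < a ^ 3 * n := by
      calc a ^ 3 * 2 ^ 19 = 2 ^ 19 * a ^ 3 := by ring
        _ < n * t ^ 3 := c1
        _ ≤ n * a ^ 3 := by gcongr
        _ = _ := by ring
    exact Nat.lt_of_mul_lt_mul_left h1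
  have c3 : 2 ^ 19 * n ^ 2 ≤ a ^ 3 := by
    have h1 : a ^ 3 * (2 ^ 19 * n ^ 2) ≤ a ^ 3 * a ^ 3 := by
      calc a ^ 3 * (2 ^ 19 * n ^ 2) = n ^ 2 * (2 ^ 19 * a ^ 3) := by ring
        _ ≤ n ^ 2 * (n * t ^ 3) := by gcongr
        _ = (n * t) ^ 3 := by ring
        _ ≤ (a ^ 2) ^ 3 := by gcongr
        _ = _ := by ring
    exact Nat.le_of_mul_le_mul_left h1 (by positivity)
  have c4 : 2 ≤ t := by
    by_contra hlt
    have : t = 1 := by omega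
    rw [this] at c1 hnt
    have : a ^ 2 ≤ a ^ 3 := Nat.pow_le_pow_right ha0 (by norm_num)
    have : 0 < a ^ 2 := by positivity
    omega
  -- choice of k
  have hex : ∃ k, 2 ^ 16 * a ^ 3 ≤ n * k ^ 3 := by
    refine ⟨2 ^ 16 * a, ?_⟩
    calc 2 ^ 16 * a ^ 3 = 1 * (2 ^ 16 * a ^ 3) := by ring
      _ ≤ n * (2 ^ 48 * a ^ 3) := Nat.mul_le_mul hn0 (Nat.mul_le_mul_right _ (by norm_num))
      _ = _ := by ring
  obtain ⟨k, hk1, hk2⟩ : ∃ k, 2 ^ 16 * a ^ 3 ≤ n * (k + 1) ^ 3 ∧ n * k ^ 3 < 2 ^ 16 * a ^ 3 := by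
    classical
    have h1 := Nat.find_spec hex
    have h2 : Nat.find hex ≠ 0 := by
      intro h
      rw [h] at h1
      have : 0 < a ^ 3 := by positivity
      simp at h1
      omega
    obtain ⟨k, hk⟩ := Nat.exists_eq_succ_of_ne_zero h2
    refine ⟨k, ?_, ?_⟩
    · rw [hk] at h1; exact h1
    · have := Nat.find_min hex (m := k) (by omega)
      omega
  have hk0 : 1 ≤ k := by
    rcases Nat.eq_zero_or_pos k with h | h
    · rw [h] at hk1
      have h3 : n ≤ a ^ 2 := le_trans (by nlinarith) hnt
      have : a ^ 2 ≤ a ^ 3 := Nat.pow_le_pow_right ha0 (by norm_num)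
      have : 0 < a ^ 2 := by positivity
      omega
    · exact h
  have hk3 : n * (k + 1) ^ 3 ≤ 2 ^ 19 * a ^ 3 := by
    calc n * (k + 1) ^ 3 ≤ n * (2 * k) ^ 3 := by gcongr; omega
      _ = 8 * (n * k ^ 3) := by ring
      _ ≤ 8 * (2 ^ 16 * a ^ 3) := by gcongr
      _ = _ := by ring
  have hk2' : 2 ≤ k + 1 := by omega
  clear hk2 hk0 hex
  generalize k + 1 = κ at *
  have hκa : κ ≤ a := by
    apply le_of_pow_le_pow_left₀ (n := 3) (by norm_num) (Nat.zero_le _)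
    have : 2 ^ 19 * κ ^ 3 ≤ 2 ^ 19 * a ^ 3 := le_trans (by gcongr) hk3
    omega
  have h200 : 200 * n ≤ κ * a := by
    apply le_of_pow_le_pow_left₀ (n := 3) (by norm_num) (Nat.zero_le _)
    have h1 : n * (200 * n) ^ 3 ≤ n * (κ * a) ^ 3 := by
      calc n * (200 * n) ^ 3 = 200 ^ 3 * n ^ 4 := by ring
        _ ≤ 2 ^ 38 * n ^ 4 := Nat.mul_le_mul_right _ (by norm_num)
        _ = (2 ^ 19 * n ^ 2) ^ 2 := by ring
        _ ≤ (a ^ 3) ^ 2 := by gcongr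
        _ ≤ 2 ^ 16 * a ^ 3 * a ^ 3 := by nlinarith [Nat.zero_le (a ^ 3 * a ^ 3)]
        _ ≤ (n * κ ^ 3) * a ^ 3 := by gcongr
        _ = _ := by ring
    exact Nat.le_of_mul_le_mul_left h1 hn0
  have hmany := many_lines A S κ hk2' hAp h200 hk1
  rw [← ha, ← hn] at hmany
  set m := n * a ^ 2 / (2 * κ) with hm
  have hm1 : m * (2 * κ) ≤ n * a ^ 2 := Nat.div_mul_le_self _ _
  have hmL : m ≤ (lines A S).card := by
    refine Nat.div_le_of_le_mul ?_
    linarith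
  have hm2 : n * a ^ 2 ≤ 4 * κ * m := by
    have h1 : n * a ^ 2 < (m + 1) * (2 * κ) := by
      have := Nat.lt_div_mul_add (a := n * a ^ 2) (b := 2 * κ) (by omega)
      rw [← hm] at this
      linarith
    have h2 : 4 * κ ≤ n * a ^ 2 := by
      calc 4 * κ ≤ n * a := Nat.mul_le_mul (by omega) hκa
        _ ≤ n * a ^ 2 := by gcongr; nlinarith
    nlinarith
  obtain ⟨𝓛, h𝓛, h𝓛m⟩ := Finset.exists_subset_card_eq hmL
  have hfinal := rich_lines (A + A) 𝓛 t c4 (fun l hl => lines_rich A S t hS l (h𝓛 hl)) (by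
    rw [h𝓛m, ← hu]
    have h1 : 100 * n * u ≤ κ * a ^ 2 := by
      apply le_of_pow_le_pow_left₀ (n := 15) (by norm_num) (Nat.zero_le _)
      have e1 : 2 ^ 76 * (u ^ 15 * n ^ 8) ≤ a ^ 27 := by
        calc 2 ^ 76 * (u ^ 15 * n ^ 8) = (2 ^ 76 * u ^ 15) * n ^ 8 := by ring
          _ ≤ (n ^ 4 * t ^ 12 * a ^ 3) * n ^ 8 := by gcongr
          _ = (n * t) ^ 12 * a ^ 3 := by ring
          _ ≤ (a ^ 2) ^ 12 * a ^ 3 := by gcongr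
          _ = _ := by ring
      have e2 : n ^ 5 * (100 * n * u) ^ 15 ≤ n ^ 5 * (κ * a ^ 2) ^ 15 := by
        calc n ^ 5 * (100 * n * u) ^ 15 = 100 ^ 15 * ((u ^ 15 * n ^ 8) * (n ^ 2) ^ 6) := by ring
          _ ≤ (2 ^ 76 * (2 ^ 19) ^ 6) * ((u ^ 15 * n ^ 8) * (n ^ 2) ^ 6) := by gcongr; norm_num
          _ = (2 ^ 76 * (u ^ 15 * n ^ 8)) * (2 ^ 19 * n ^ 2) ^ 6 := by ring
          _ ≤ a ^ 27 * (a ^ 3) ^ 6 := by gcongr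
          _ = 1 * a ^ 45 := by ring
          _ ≤ (2 ^ 16) ^ 5 * a ^ 45 := by gcongr; norm_num
          _ = (2 ^ 16 * a ^ 3) ^ 5 * a ^ 30 := by ring
          _ ≤ (n * κ ^ 3) ^ 5 * a ^ 30 := by gcongr
          _ = _ := by ring
      exact Nat.le_of_mul_le_mul_left e2 (by positivity)
    have h2 : κ * (200 * (u * m)) ≤ κ * a ^ 4 := by
      calc κ * (200 * (u * m)) = 100 * u * (m * (2 * κ)) := by ring
        _ ≤ 100 * u * (n * a ^ 2) := by gcongr
        _ = (100 * n * u) * a ^ 2 := by ring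
        _ ≤ (κ * a ^ 2) * a ^ 2 := by gcongr
        _ = _ := by ring
    refine (Nat.le_of_mul_le_mul_left h2 (by omega)).trans ?_
    calc a ^ 4 = (a ^ 2) ^ 2 := by ring
      _ ≤ p ^ 2 := Nat.pow_le_pow_left hAp 2)
  rw [h𝓛m, ← hu] at hfinal
  have g1 : n * a ^ 2 * t ^ 4 ≤ 2 ^ 17 * κ * u ^ 5 := by
    calc n * a ^ 2 * t ^ 4 ≤ (4 * κ * m) * t ^ 4 := by gcongr
      _ = 4 * κ * (m * t ^ 4) := by ring
      _ ≤ 4 * κ * (2 ^ 15 * u ^ 5) := by gcongr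
      _ = _ := by ring
  have g2 : a ^ 3 * (n ^ 4 * t ^ 12 * a ^ 3) ≤ a ^ 3 * (2 ^ 70 * u ^ 15) := by
    calc a ^ 3 * (n ^ 4 * t ^ 12 * a ^ 3) = n * (n * a ^ 2 * t ^ 4) ^ 3 := by ring
      _ ≤ n * (2 ^ 17 * κ * u ^ 5) ^ 3 := by gcongr
      _ = 2 ^ 51 * (n * κ ^ 3) * u ^ 15 := by ring
      _ ≤ 2 ^ 51 * (2 ^ 19 * a ^ 3) * u ^ 15 := by gcongr
      _ = _ := by ring
  have g3 := Nat.le_of_mul_le_mul_left g2 (by positivity)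
  have g4 : 2 ^ 70 * u ^ 15 ≤ 2 ^ 76 * u ^ 15 := by gcongr <;> norm_num
  omega
end
end RudnevAux

namespace RudnevAux
section
variable {p : ℕ} [Fact p.Prime]

/-- multiplicative representation function -/
def rr (A : Finset (ZMod p)) (x : ZMod p) : ℕ := (A.filter (fun b => x * b ∈ A)).card

lemma log_prime_ge : (1 : ℝ) ≤ 2 * Real.log p := by
  have h2 : (2 : ℝ) ≤ p := by exact_mod_cast (Fact.out : p.Prime).two_le
  have := Real.log_le_log (by norm_num) h2
  linarith [Real.log_two_gt_d9]

lemma cube_le_sum (r N : ℕ) (h : r ≤ N) :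
    r ^ 3 ≤ ∑ t ∈ Finset.Icc 1 N, if t ≤ r then 3 * t ^ 2 else 0 := by
  rw [← Finset.sum_filter]
  have h1 : (Finset.Icc 1 N).filter (fun t => t ≤ r) = Finset.Icc 1 r := by
    ext t
    simp only [Finset.mem_filter, Finset.mem_Icc]
    omega
  rw [h1]
  clear h h1
  induction r with
  | zero => simp
  | succ r ih =>
    rw [Finset.sum_Icc_succ_top (by omega)]
    have h1 : (r + 1) ^ 3 ≤ r ^ 3 + 3 * (r + 1) ^ 2 := by ring_nf; omega
    exact h1.trans (Nat.add_le_add_right ih _)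

/-- third multiplicative energy -/
theorem third_energy (A : Finset (ZMod p)) (h0 : (0 : ZMod p) ∉ A) (hA : A.Nonempty)
    (hAp : A.card ^ 2 ≤ p) (K N : ℝ) (hK : 0 < K) (hN : 0 < N) (hN2 : N ≤ 2 * A.card)
    (hNa : (A.card : ℝ) ≤ N)
    (hu : ((A + A).card : ℝ) ≤ K * N) :
    ∑ x, (rr A x : ℝ) ^ 3 ≤ 9 * 2 ^ 20 * (K ^ ((5 : ℝ) / 4) * N) ^ 3 * Real.log p := by
  set a := A.card with ha
  have ha0 : 0 < a := Finset.card_pos.mpr hA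
  have ha0R : (0 : ℝ) < a := by exact_mod_cast ha0
  set κ := K ^ ((5 : ℝ) / 4) with hκ
  have hκ0 : 0 < κ := Real.rpow_pos_of_pos hK _
  have hκ12 : κ ^ 12 = K ^ 15 := by
    rw [hκ, ← Real.rpow_natCast, ← Real.rpow_mul hK.le, ← Real.rpow_natCast]
    norm_num
  set M := 2 ^ 20 * (κ * N) ^ 3 with hM
  have hM0 : 0 < M := by positivity
  have hS : ∀ t : ℕ, ((Finset.univ.filter (fun x => t ≤ rr A x)).card : ℝ) * (t : ℝ) ^ 3 ≤ M := by
    intro t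
    have h1 := popular_ratios A (Finset.univ.filter (fun x => t ≤ rr A x)) h0 hAp t
      (fun x hx => (Finset.mem_filter.mp hx).2)
    rw [← ha] at h1
    set s := (Finset.univ.filter (fun x => t ≤ rr A x)).card
    set u := (A + A).card
    have h2 : (s : ℝ) ^ 4 * (t : ℝ) ^ 12 * (a : ℝ) ^ 3 ≤ 2 ^ 76 * (u : ℝ) ^ 15 := by
      exact_mod_cast h1
    have h3 : (2 : ℝ) ^ 76 * (u : ℝ) ^ 15 ≤ 2 ^ 76 * (K * N) ^ 15 := by gcongr
    have h4 : N ^ 3 ≤ (2 * a) ^ 3 := by gcongr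
    apply le_of_pow_le_pow_left₀ (n := 4) (by norm_num) hM0.le
    have h5 : (a : ℝ) ^ 3 * (s * (t : ℝ) ^ 3) ^ 4 ≤ (a : ℝ) ^ 3 * M ^ 4 := by
      calc (a : ℝ) ^ 3 * (s * (t : ℝ) ^ 3) ^ 4 = (s : ℝ) ^ 4 * (t : ℝ) ^ 12 * (a : ℝ) ^ 3 := by ring
        _ ≤ 2 ^ 76 * (K * N) ^ 15 := h2.trans h3
        _ = 2 ^ 76 * K ^ 15 * N ^ 12 * N ^ 3 := by ring
        _ ≤ 2 ^ 76 * K ^ 15 * N ^ 12 * (2 * a) ^ 3 := by gcongr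
        _ = (a : ℝ) ^ 3 * (2 ^ 79 * (K ^ 15 * N ^ 12)) := by ring
        _ ≤ (a : ℝ) ^ 3 * (2 ^ 80 * (K ^ 15 * N ^ 12)) := by
          apply mul_le_mul_of_nonneg_left _ (by positivity)
          apply mul_le_mul_of_nonneg_right _ (by positivity)
          norm_num
        _ = _ := by rw [hM, ← hκ12]; ring
    exact le_of_mul_le_mul_left h5 (by positivity)
  have hrr : ∀ x, rr A x ≤ a := fun x => Finset.card_le_card (Finset.filter_subset _ _)
  have h1 : ∑ x, (rr A x) ^ 3 ≤
      ∑ t ∈ Finset.Icc 1 a, 3 * t ^ 2 * (Finset.univ.filter (fun x => t ≤ rr A x)).card := by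
    calc ∑ x, (rr A x) ^ 3 ≤ ∑ x, ∑ t ∈ Finset.Icc 1 a, (if t ≤ rr A x then 3 * t ^ 2 else 0) :=
          Finset.sum_le_sum fun x _ => cube_le_sum _ _ (hrr x)
      _ = ∑ t ∈ Finset.Icc 1 a, ∑ x, (if t ≤ rr A x then 3 * t ^ 2 else 0) := Finset.sum_comm
      _ = _ := by
        refine Finset.sum_congr rfl fun t _ => ?_
        rw [← Finset.sum_filter, Finset.sum_const, smul_eq_mul, mul_comm]
  have h2 : ∑ x, (rr A x : ℝ) ^ 3 ≤ ∑ t ∈ Finset.Icc 1 a,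
      3 * (t : ℝ) ^ 2 * ((Finset.univ.filter (fun x => t ≤ rr A x)).card : ℝ) := by
    exact_mod_cast h1
  refine h2.trans ?_
  have h3 : ∑ t ∈ Finset.Icc 1 a,
      3 * (t : ℝ) ^ 2 * ((Finset.univ.filter (fun x => t ≤ rr A x)).card : ℝ) ≤
      ∑ t ∈ Finset.Icc 1 a, 3 * M * (t : ℝ)⁻¹ := by
    refine Finset.sum_le_sum fun t ht => ?_
    have ht0 : (0 : ℝ) < t := by exact_mod_cast (Finset.mem_Icc.mp ht).1
    rw [← div_eq_mul_inv, le_div_iff₀ ht0]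
    nlinarith [hS t]
  refine h3.trans ?_
  rw [← Finset.mul_sum]
  have h4 : ∑ t ∈ Finset.Icc 1 a, (t : ℝ)⁻¹ ≤ 1 + Real.log a := by
    have := harmonic_le_one_add_log a
    rw [harmonic_eq_sum_Icc] at this
    push_cast at this
    exact this
  have h5 : Real.log a ≤ Real.log p := by
    apply Real.log_le_log ha0R
    have : a ≤ p := le_trans (by nlinarith) hAp
    exact_mod_cast this
  have h6 := log_prime_ge (p := p)
  calc 3 * M * ∑ t ∈ Finset.Icc 1 a, (t : ℝ)⁻¹ ≤ 3 * M * (3 * Real.log p) := by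
        gcongr
        linarith
    _ = _ := by rw [hM]; ring

lemma pair_count (B : Finset (ZMod p)) (a a' : ZMod p) (ha : a ≠ 0) (ha' : a' ≠ 0) :
    ((B ×ˢ B).filter (fun z => z.1 * a' = z.2 * a)).card ≤ rr (B.erase 0) (a' / a) + 1 := by
  classical
  have hsub : (B ×ˢ B).filter (fun z => z.1 * a' = z.2 * a) ⊆
      insert (0, 0) (((B.erase 0).filter (fun b => a' / a * b ∈ B.erase 0)).image
        (fun b => (b, a' / a * b))) := by
    rintro ⟨b, b'⟩ hz
    simp only [Finset.mem_filter, Finset.mem_product] at hz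
    obtain ⟨⟨hb, hb'⟩, h⟩ := hz
    have h1 : a' / a * b = b' := by
      field_simp
      linear_combination h
    by_cases hb0 : b = 0
    · subst hb0
      rw [mul_zero] at h1
      rw [← h1]
      exact Finset.mem_insert_self _ _
    · refine Finset.mem_insert_of_mem (Finset.mem_image.mpr ⟨b, ?_, ?_⟩)
      · simp only [Finset.mem_filter, Finset.mem_erase]
        refine ⟨⟨hb0, hb⟩, ?_, by rwa [h1]⟩
        exact mul_ne_zero (div_ne_zero ha' ha) hb0
      · rw [h1]
  refine (Finset.card_le_card hsub).trans ((Finset.card_insert_le _ _).trans ?_)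
  exact Nat.add_le_add_right Finset.card_image_le _

lemma count_le (A B : Finset (ZMod p)) (h0 : (0 : ZMod p) ∉ A) :
    ((A ×ˢ A ×ˢ B ×ˢ B ×ˢ B ×ˢ B).filter
              (fun t : ZMod p × ZMod p × ZMod p × ZMod p × ZMod p × ZMod p =>
                t.2.2.1 * t.2.1 = t.2.2.2.1 * t.1 ∧
                t.2.2.2.2.1 * t.2.1 = t.2.2.2.2.2 * t.1)).card ≤
      2 * ∑ x, rr A x * rr (B.erase 0) x ^ 2 + 2 * A.card ^ 2 := by
  classical
  set f : ZMod p × ZMod p → Finset (ZMod p × ZMod p) :=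
    fun z => (B ×ˢ B).filter (fun w => w.1 * z.2 = w.2 * z.1) with hf
  have h1 : ((A ×ˢ A ×ˢ B ×ˢ B ×ˢ B ×ˢ B).filter
              (fun t : ZMod p × ZMod p × ZMod p × ZMod p × ZMod p × ZMod p =>
                t.2.2.1 * t.2.1 = t.2.2.2.1 * t.1 ∧
                t.2.2.2.2.1 * t.2.1 = t.2.2.2.2.2 * t.1)).card ≤
      ((A ×ˢ A).sigma (fun z => f z ×ˢ f z)).card := by
    refine Finset.card_le_card_of_injOn (fun t => (⟨(t.1, t.2.1),
      ((t.2.2.1, t.2.2.2.1), (t.2.2.2.2.1, t.2.2.2.2.2))⟩ :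
        (_ : ZMod p × ZMod p) × ((ZMod p × ZMod p) × (ZMod p × ZMod p)))) ?_ ?_
    · rintro ⟨a, a', b1, b1', b2, b2'⟩ ht
      simp only [Finset.mem_coe, Finset.mem_filter, Finset.mem_product, Finset.mem_sigma, hf]
        at ht ⊢
      tauto
    · rintro ⟨a, a', b1, b1', b2, b2'⟩ _ ⟨c, c', d1, d1', d2, d2'⟩ _ h
      simp only [Sigma.mk.injEq, Prod.mk.injEq, heq_eq_eq] at h ⊢
      tauto
  refine h1.trans ?_
  rw [Finset.card_sigma]
  have h2 : ∀ z ∈ A ×ˢ A, (f z ×ˢ f z).card ≤ 2 * rr (B.erase 0) (z.2 / z.1) ^ 2 + 2 := by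
    intro z hz
    obtain ⟨hz1, hz2⟩ := Finset.mem_product.mp hz
    rw [Finset.card_product]
    have := pair_count B z.1 z.2 (fun h => h0 (h ▸ hz1)) (fun h => h0 (h ▸ hz2))
    set r := rr (B.erase 0) (z.2 / z.1)
    refine (Nat.mul_le_mul this this).trans ?_
    zify
    nlinarith [sq_nonneg ((r : ℤ) - 1)]
  refine (Finset.sum_le_sum h2).trans ?_
  rw [Finset.sum_add_distrib, ← Finset.mul_sum, Finset.sum_const, Finset.card_product, smul_eq_mul]
  have h3 : ∑ z ∈ A ×ˢ A, rr (B.erase 0) (z.2 / z.1) ^ 2 ≤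
      ∑ x, rr A x * rr (B.erase 0) x ^ 2 := by
    rw [← Finset.sum_fiberwise_of_maps_to (s := A ×ˢ A) (t := Finset.univ)
      (g := fun z => z.2 / z.1) (fun _ _ => Finset.mem_univ _)]
    refine Finset.sum_le_sum fun x _ => ?_
    rw [Finset.sum_congr rfl (g := fun _ => rr (B.erase 0) x ^ 2)
      (fun z hz => by rw [(Finset.mem_filter.mp hz).2]), Finset.sum_const, smul_eq_mul]
    refine Nat.mul_le_mul_right _ ?_
    refine Finset.card_le_card_of_injOn (fun z => z.1) ?_ ?_
    · rintro ⟨a, a'⟩ hz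
      simp only [Finset.mem_coe, Finset.mem_filter, Finset.mem_product] at hz ⊢
      obtain ⟨⟨ha, ha'⟩, rfl⟩ := hz
      have : a ≠ 0 := fun h => h0 (h ▸ ha)
      refine ⟨ha, ?_⟩
      rwa [div_mul_cancel₀ _ this]
    · rintro ⟨a, a'⟩ hz ⟨b, b'⟩ hw h
      simp only [Finset.mem_coe, Finset.mem_filter, Finset.mem_product] at hz hw h
      subst h
      have ha : a ≠ 0 := fun h => h0 (h ▸ hz.1.1)
      have := hz.2.trans hw.2.symm
      rw [div_left_inj' ha] at this
      rw [this]
  nlinarith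
end
end RudnevAux

theorem stmt_15 :
    ∃ C : ℝ, 0 < C ∧
      ∀ (p : ℕ), p.Prime →
        ∀ (A B : Finset (ZMod p)) (K L : ℝ), 0 < K → 0 < L →
          (0 : ZMod p) ∉ A →
          (A.card : ℝ) < Real.sqrt p →
          (B.card : ℝ) < Real.sqrt p →
          ((A + A).card : ℝ) ≤ K * A.card →
          ((B + B).card : ℝ) ≤ L * B.card →
          (((A ×ˢ A ×ˢ B ×ˢ B ×ˢ B ×ˢ B).filter
              (fun t : ZMod p × ZMod p × ZMod p × ZMod p × ZMod p × ZMod p =>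
                t.2.2.1 * t.2.1 = t.2.2.2.1 * t.1 ∧
                t.2.2.2.2.1 * t.2.1 = t.2.2.2.2.2 * t.1)).card : ℝ)
            ≤ C * (K ^ ((5 : ℝ) / 4) * L ^ ((5 : ℝ) / 2) * A.card * (B.card : ℝ) ^ 2 *
                  Real.log p
                + (A.card : ℝ) ^ 2 * B.card) := by
  refine ⟨18 * 2 ^ 20, by norm_num, ?_⟩
  intro p hp A B K L hK hL h0 hAp hBp hA hB
  have : Fact p.Prime := ⟨hp⟩
  have hlog := RudnevAux.log_prime_ge (p := p)
  have hlog0 : 0 < Real.log p := by linarith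
  have hK' : 0 < K ^ ((5 : ℝ) / 4) := Real.rpow_pos_of_pos hK _
  have hL' : 0 < L ^ ((5 : ℝ) / 4) := Real.rpow_pos_of_pos hL _
  have hL2 : L ^ ((5 : ℝ) / 2) = (L ^ ((5 : ℝ) / 4)) ^ 2 := by
    rw [← Real.rpow_natCast, ← Real.rpow_mul hL.le]
    norm_num
  rw [hL2]
  rcases A.eq_empty_or_nonempty with rfl | hAne
  · simp
  rcases B.eq_empty_or_nonempty with rfl | hBne
  · simp
  have hcard : ∀ S : Finset (ZMod p), (S.card : ℝ) < Real.sqrt p → S.card ^ 2 ≤ p := by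
    intro S hS
    have := (Real.lt_sqrt (by positivity)).mp hS
    exact_mod_cast this.le
  have hcount := RudnevAux.count_le A B h0
  set κ := K ^ ((5 : ℝ) / 4) with hκ
  set l := L ^ ((5 : ℝ) / 4) with hl
  set a := A.card with ha
  set b := B.card with hb
  have ha0 : (0 : ℝ) < a := by exact_mod_cast Finset.card_pos.mpr hAne
  have hb1 : (1 : ℝ) ≤ b := by exact_mod_cast Finset.card_pos.mpr hBne
  have hEA : ∑ x, (RudnevAux.rr A x : ℝ) ^ 3 ≤ 9 * 2 ^ 20 * (κ * a) ^ 3 * Real.log p :=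
    RudnevAux.third_energy A h0 hAne (hcard A hAp) K a hK ha0 (by rw [← ha]; linarith)
      (by rw [← ha]) hA
  have hEB : ∑ x, (RudnevAux.rr (B.erase 0) x : ℝ) ^ 3
      ≤ 9 * 2 ^ 20 * (l * b) ^ 3 * Real.log p := by
    rcases (B.erase 0).eq_empty_or_nonempty with he | hne
    · rw [he]
      have : ∀ x, RudnevAux.rr (∅ : Finset (ZMod p)) x = 0 := by
        intro x; simp [RudnevAux.rr]
      simp only [this]
      simp only [Nat.cast_zero, ne_eq, OfNat.ofNat_ne_zero, not_false_eq_true, zero_pow,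
        Finset.sum_const_zero]
      positivity
    · have h1 : (B.erase 0).card ≤ b := Finset.card_le_card (Finset.erase_subset _ _)
      have h2 : b ≤ (B.erase 0).card + 1 := by
        have := Finset.pred_card_le_card_erase (s := B) (a := (0 : ZMod p))
        omega
      have h3 : 0 < (B.erase 0).card := Finset.card_pos.mpr hne
      have h4 : b ≤ 2 * (B.erase 0).card := by omega
      refine RudnevAux.third_energy (B.erase 0) (Finset.notMem_erase _ _) hne
        ((Nat.pow_le_pow_left h1 2).trans (hcard B hBp)) L b hL (by linarith)
        (by exact_mod_cast h4) (by exact_mod_cast h1) ?_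
      refine le_trans ?_ hB
      exact_mod_cast Finset.card_le_card
        (Finset.add_subset_add (Finset.erase_subset _ _) (Finset.erase_subset _ _))
  set X := κ * a with hX
  set Y := l * b with hY
  have hX0 : 0 < X := by positivity
  have hY0 : 0 < Y := by positivity
  have hmain : ∑ x, (RudnevAux.rr A x : ℝ) * (RudnevAux.rr (B.erase 0) x : ℝ) ^ 2 ≤
      9 * 2 ^ 20 * (X * Y ^ 2) * Real.log p := by
    have h1 : ∀ r s : ℝ, 0 ≤ r → 0 ≤ s →
        r * s ^ 2 ≤ X * Y ^ 2 / 3 * (r ^ 3 / X ^ 3 + 2 * (s ^ 3 / Y ^ 3)) := by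
      intro r s hr hs
      have h2 : ∀ x y : ℝ, 0 ≤ x → 0 ≤ y → x * y ^ 2 ≤ (x ^ 3 + 2 * y ^ 3) / 3 := by
        intro x y hx hy
        nlinarith [mul_nonneg (sq_nonneg (x - y)) (by positivity : 0 ≤ x + 2 * y)]
      have h3 := h2 (r / X) (s / Y) (by positivity) (by positivity)
      have h4 := mul_le_mul_of_nonneg_left h3 (by positivity : 0 ≤ X * Y ^ 2)
      have h5 : X * Y ^ 2 * (r / X * (s / Y) ^ 2) = r * s ^ 2 := by
        field_simp
      rw [h5, div_pow, div_pow] at h4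
      linarith
    calc ∑ x, (RudnevAux.rr A x : ℝ) * (RudnevAux.rr (B.erase 0) x : ℝ) ^ 2
        ≤ ∑ x, X * Y ^ 2 / 3 * ((RudnevAux.rr A x : ℝ) ^ 3 / X ^ 3
            + 2 * ((RudnevAux.rr (B.erase 0) x : ℝ) ^ 3 / Y ^ 3)) :=
          Finset.sum_le_sum fun x _ => h1 _ _ (by positivity) (by positivity)
      _ = X * Y ^ 2 / 3 * ((∑ x, (RudnevAux.rr A x : ℝ) ^ 3) / X ^ 3
            + 2 * ((∑ x, (RudnevAux.rr (B.erase 0) x : ℝ) ^ 3) / Y ^ 3)) := by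
          rw [← Finset.mul_sum, Finset.sum_add_distrib, ← Finset.mul_sum, Finset.sum_div,
            Finset.sum_div]
      _ ≤ X * Y ^ 2 / 3 * ((9 * 2 ^ 20 * X ^ 3 * Real.log p) / X ^ 3
            + 2 * ((9 * 2 ^ 20 * Y ^ 3 * Real.log p) / Y ^ 3)) := by gcongr
      _ = _ := by
          field_simp
          ring
  have hcountR : (((A ×ˢ A ×ˢ B ×ˢ B ×ˢ B ×ˢ B).filter
              (fun t : ZMod p × ZMod p × ZMod p × ZMod p × ZMod p × ZMod p =>
                t.2.2.1 * t.2.1 = t.2.2.2.1 * t.1 ∧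
                t.2.2.2.2.1 * t.2.1 = t.2.2.2.2.2 * t.1)).card : ℝ) ≤
      2 * ∑ x, (RudnevAux.rr A x : ℝ) * (RudnevAux.rr (B.erase 0) x : ℝ) ^ 2 + 2 * (a : ℝ) ^ 2 := by
    exact_mod_cast hcount
  refine hcountR.trans ?_
  have e1 : X * Y ^ 2 = κ * l ^ 2 * a * (b : ℝ) ^ 2 := by rw [hX, hY]; ring
  rw [e1] at hmain
  have e2 : (a : ℝ) ^ 2 ≤ (a : ℝ) ^ 2 * b := le_mul_of_one_le_right (by positivity) hb1
  have e3 : (0 : ℝ) ≤ (a : ℝ) ^ 2 := by positivity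
  linarith
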